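/- arXiv:1406.6514 — 5 statements merged into one kernel-verified Lean document; each statement's English description precedes it below -/
import Mathlib

section
/- Let $Z$ be a $p$-dimensional Gaussian random vector with mean $0$ and covariance $\Sigma$ satisfying $\lambda_{\max}(\Sigma) \le M_0$ and $\max_j \sum_{i:|i-j|>k} |\sigma_{ij}| \le M k^{-\alpha}$ for all $k \ge 1$. Then for any even number $K_0 \ge 2$ there exists a constant $C$ (depending on $K_0, M_0, M$) such that $\sum_{1\le i_1,\dots,i_{K_0} \le p} \mathbb{E}\prod_{k=1}^{K_0}(z_{i_k}^2 - \sigma_{i_k i_k}) \le C p^{K_0/2}$. -/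
open MeasureTheory ProbabilityTheory Finset

noncomputable section

/-- `Z` is a centered Gaussian vector with covariance matrix `S`. -/
def IsGaussianVec {Ω : Type*} [MeasureSpace Ω] {p : ℕ}
    (Z : Ω → Fin p → ℝ) (S : Matrix (Fin p) (Fin p) ℝ) : Prop :=
  ∀ a : Fin p → ℝ,
    Measure.map (fun ω => ∑ i, a i * Z ω i) (ℙ : Measure Ω)
      = gaussianReal 0 (∑ i, ∑ j, a i * S i j * a j).toNNReal

/-!
The sum is `𝔼 Q ^ K₀` with `Q = ‖Z‖² - 𝔼‖Z‖²`. In an orthonormal basis diagonalising the covariance,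
the coordinates of `Z` are independent centred Gaussians whose variances `vᵢ` are at most `M₀`, so
`Q` is a sum of independent variables `vᵢ (χ² - 1)` with `∑ vᵢ² ≤ L²` for `L = M₀ √p`. The linear
term of `log 𝔼 exp (t vᵢ (χ² - 1)) = -t vᵢ - log (1 - 2 t vᵢ) / 2` vanishes, so
`𝔼 exp (t Q) ≤ exp (4 t² L²)` for `|t| ≤ 1 / (4 L)`. Taking `t = ±1 / (4 L)` and comparing powers
with exponentials gives `𝔼 |Q| ^ K₀ ≤ C L ^ K₀`, which is of order `p ^ (K₀ / 2)`.
-/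

open Module
open scoped NNReal ENNReal RealInnerProductSpace

lemma exp_neg_mul_inv_sqrt_one_sub_two_mul_le {s : ℝ} (hs : s ≤ 1 / 4) :
    Real.exp (-s) * (√(1 - 2 * s))⁻¹ ≤ Real.exp (4 * s ^ 2) := by
  have hpos : 0 < 1 - 2 * s := by linarith
  have hinv : (√(1 - 2 * s))⁻¹ ≤ Real.exp (s + 4 * s ^ 2) := by
    rw [← Real.sqrt_inv, Real.sqrt_le_left (Real.exp_pos _).le, ← Real.exp_nat_mul]
    calc (1 - 2 * s)⁻¹ ≤ 2 * s + 8 * s ^ 2 + 1 := by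
          rw [inv_le_iff_one_le_mul₀ hpos]
          nlinarith [mul_nonneg (sq_nonneg s) (by linarith : 0 ≤ 1 - 4 * s)]
      _ ≤ Real.exp (2 * s + 8 * s ^ 2) := Real.add_one_le_exp _
      _ = Real.exp ((2 : ℕ) * (s + 4 * s ^ 2)) := by congr 1; push_cast; ring
  calc Real.exp (-s) * (√(1 - 2 * s))⁻¹
      ≤ Real.exp (-s) * Real.exp (s + 4 * s ^ 2) := by gcongr
    _ = Real.exp (4 * s ^ 2) := by rw [← Real.exp_add]; congr 1; ring

lemma mgf_sq_gaussianReal {v : ℝ≥0} {t : ℝ} (h : 2 * (t * v) < 1) :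
    mgf (fun x ↦ x ^ 2) (gaussianReal 0 v) t = (√(1 - 2 * (t * v)))⁻¹ := by
  rcases eq_or_ne v 0 with rfl | hv
  · simp [mgf]
  have hdens (x : ℝ) : gaussianPDFReal 0 v x * Real.exp (t * x ^ 2) =
      (√(2 * Real.pi * v))⁻¹ * Real.exp (-((1 - 2 * (t * v)) / (2 * v)) * x ^ 2) := by
    rw [gaussianPDFReal, mul_assoc, ← Real.exp_add]
    congr 2
    field_simp
    ring
  simp only [mgf, integral_gaussianReal_eq_integral_smul hv, smul_eq_mul, hdens]
  rw [integral_const_mul, integral_gaussian, ← Real.sqrt_inv, ← Real.sqrt_inv,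
    ← Real.sqrt_mul (by positivity)]
  congr 1
  have : 1 - 2 * (t * v) ≠ 0 := by linarith
  field_simp

section Moments

variable {Ω : Type*} {mΩ : MeasurableSpace Ω} {P : Measure Ω}

lemma mgf_sq_sub_gaussianReal {X : Ω → ℝ} {v : ℝ≥0} {t : ℝ}
    (hX : HasLaw X (gaussianReal 0 v) P) (h : 2 * (t * v) < 1) :
    mgf (fun ω ↦ X ω ^ 2 - v) P t = Real.exp (-(t * v)) * (√(1 - 2 * (t * v)))⁻¹ := by
  have hsq : mgf (fun ω ↦ X ω ^ 2) P t = (√(1 - 2 * (t * v)))⁻¹ := by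
    rw [← mgf_sq_gaussianReal h, ← hX.map_eq, mgf_map hX.aemeasurable (by fun_prop)]
    rfl
  simp only [sub_eq_add_neg, mgf_add_const, hsq, mul_neg, mul_comm]

lemma integral_abs_pow_le_of_mgf_le {X : Ω → ℝ} {t B : ℝ} (ht : 0 < t)
    (hpos : Integrable (fun ω ↦ Real.exp (t * X ω)) P)
    (hneg : Integrable (fun ω ↦ Real.exp (-t * X ω)) P)
    (hBpos : mgf X P t ≤ B) (hBneg : mgf X P (-t) ≤ B) (n : ℕ) :
    ∫ ω, |X ω| ^ n ∂P ≤ 2 * B * n.factorial * (1 / t) ^ n := by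
  have hpt (x : ℝ) : |x| ^ n ≤
      n.factorial * (1 / t) ^ n * (Real.exp (t * x) + Real.exp (-t * x)) := by
    have hexp : (t * |x|) ^ n / n.factorial ≤ Real.exp (t * x) + Real.exp (-t * x) :=
      calc (t * |x|) ^ n / n.factorial ≤ Real.exp (t * |x|) :=
            Real.pow_div_factorial_le_exp _ (by positivity) n
        _ = Real.exp |t * x| := by rw [abs_mul, abs_of_pos ht]
        _ ≤ Real.exp (t * x) + Real.exp (-t * x) := by
            simpa only [neg_mul] using Real.exp_abs_le (t * x)
    calc |x| ^ n = n.factorial * (1 / t) ^ n * ((t * |x|) ^ n / n.factorial) := by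
          rw [mul_pow, one_div_pow]; field_simp
      _ ≤ _ := by gcongr
  calc ∫ ω, |X ω| ^ n ∂P
      ≤ ∫ ω, n.factorial * (1 / t) ^ n * (Real.exp (t * X ω) + Real.exp (-t * X ω)) ∂P :=
        integral_mono (integrable_pow_abs_of_integrable_exp_mul ht.ne' hpos hneg n)
          ((hpos.add hneg).const_mul _) fun ω ↦ hpt (X ω)
    _ = n.factorial * (1 / t) ^ n * (mgf X P t + mgf X P (-t)) := by
        rw [integral_const_mul, integral_add hpos hneg]; rfl
    _ ≤ n.factorial * (1 / t) ^ n * (B + B) := by gcongr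
    _ = 2 * B * n.factorial * (1 / t) ^ n := by ring

section Independent

variable {ι : Type*} [Fintype ι] {X : ι → Ω → ℝ} {v : ι → ℝ≥0} {t L : ℝ}

lemma mgf_sum_sq_sub_gaussianReal (hind : iIndepFun X P)
    (hX : ∀ i, HasLaw (X i) (gaussianReal 0 (v i)) P) (h : ∀ i, 2 * (t * v i) < 1) :
    mgf (fun ω ↦ ∑ i, (X i ω ^ 2 - v i)) P t =
      ∏ i, Real.exp (-(t * v i)) * (√(1 - 2 * (t * v i)))⁻¹ := by
  have hind' : iIndepFun (fun i ω ↦ X i ω ^ 2 - v i) P :=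
    hind.comp (fun i x ↦ x ^ 2 - v i) fun i ↦ by fun_prop
  have hmeas (i : ι) : AEMeasurable (fun ω ↦ X i ω ^ 2 - v i) P :=
    ((hX i).aemeasurable.pow_const 2).sub_const _
  rw [← Finset.sum_fn, hind'.mgf_sum₀ hmeas]
  exact prod_congr rfl fun i _ ↦ mgf_sq_sub_gaussianReal (hX i) (h i)

lemma integrable_exp_mul_sum_sq_sub_gaussianReal (hind : iIndepFun X P)
    (hX : ∀ i, HasLaw (X i) (gaussianReal 0 (v i)) P) (h : ∀ i, 2 * (t * v i) < 1) :
    Integrable (fun ω ↦ Real.exp (t * ∑ i, (X i ω ^ 2 - v i))) P := by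
  have := hind.isProbabilityMeasure
  rw [← mgf_pos_iff, mgf_sum_sq_sub_gaussianReal hind hX h]
  exact prod_pos fun i _ ↦
    mul_pos (Real.exp_pos _) (inv_pos.2 (Real.sqrt_pos.2 (by linarith [h i])))

lemma mgf_sum_sq_sub_gaussianReal_le (hind : iIndepFun X P)
    (hX : ∀ i, HasLaw (X i) (gaussianReal 0 (v i)) P) (h : ∀ i, t * v i ≤ 1 / 4) :
    mgf (fun ω ↦ ∑ i, (X i ω ^ 2 - v i)) P t ≤ Real.exp (4 * t ^ 2 * ∑ i, (v i : ℝ) ^ 2) := by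
  rw [mgf_sum_sq_sub_gaussianReal hind hX fun i ↦ by linarith [h i], mul_sum, Real.exp_sum]
  refine prod_le_prod (fun i _ ↦ by positivity) fun i _ ↦ ?_
  calc Real.exp (-(t * v i)) * (√(1 - 2 * (t * v i)))⁻¹
      ≤ Real.exp (4 * (t * v i) ^ 2) := exp_neg_mul_inv_sqrt_one_sub_two_mul_le (h i)
    _ = Real.exp (4 * t ^ 2 * (v i : ℝ) ^ 2) := by rw [mul_pow, mul_assoc]

lemma integral_abs_sum_sq_sub_gaussianReal_pow_le_of_pos (hind : iIndepFun X P)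
    (hX : ∀ i, HasLaw (X i) (gaussianReal 0 (v i)) P) (hL : 0 < L)
    (hv : ∑ i, (v i : ℝ) ^ 2 ≤ L ^ 2) (n : ℕ) :
    ∫ ω, |∑ i, (X i ω ^ 2 - v i)| ^ n ∂P ≤
      2 * Real.exp (1 / 4) * n.factorial * (4 * L) ^ n := by
  have hvL (i : ι) : (v i : ℝ) ≤ L := by
    refine le_of_sq_le_sq ?_ hL.le
    exact (single_le_sum (f := fun i ↦ (v i : ℝ) ^ 2) (fun _ _ ↦ sq_nonneg _)
      (mem_univ i)).trans hv
  have hsmall {t : ℝ} (ht : |t| ≤ 1 / (4 * L)) (i : ι) : t * v i ≤ 1 / 4 :=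
    calc t * v i ≤ 1 / (4 * L) * L := by
          gcongr
          exacts [(le_abs_self t).trans ht, hvL i]
      _ = 1 / 4 := by field_simp
  have hint {t : ℝ} (ht : |t| ≤ 1 / (4 * L)) :=
    integrable_exp_mul_sum_sq_sub_gaussianReal (t := t) hind hX fun i ↦ by linarith [hsmall ht i]
  have hmgf {t : ℝ} (ht : |t| ≤ 1 / (4 * L)) :
      mgf (fun ω ↦ ∑ i, (X i ω ^ 2 - v i)) P t ≤ Real.exp (1 / 4) := by
    refine (mgf_sum_sq_sub_gaussianReal_le hind hX (hsmall ht)).trans (Real.exp_le_exp.2 ?_)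
    calc 4 * t ^ 2 * ∑ i, (v i : ℝ) ^ 2 ≤ 4 * (1 / (4 * L)) ^ 2 * L ^ 2 := by
          rw [← sq_abs t]; gcongr
      _ = 1 / 4 := by field_simp
  have ht₀ : 0 < 1 / (4 * L) := by positivity
  have habs : |1 / (4 * L)| ≤ 1 / (4 * L) := (abs_of_pos ht₀).le
  have habs' : |-(1 / (4 * L))| ≤ 1 / (4 * L) := by rwa [abs_neg]
  simpa only [one_div_one_div] using
    integral_abs_pow_le_of_mgf_le ht₀ (hint habs) (hint habs') (hmgf habs) (hmgf habs') n

lemma integral_abs_sum_sq_sub_gaussianReal_pow_le (hind : iIndepFun X P)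
    (hX : ∀ i, HasLaw (X i) (gaussianReal 0 (v i)) P) (hL : 0 ≤ L)
    (hv : ∑ i, (v i : ℝ) ^ 2 ≤ L ^ 2) (n : ℕ) :
    ∫ ω, |∑ i, (X i ω ^ 2 - v i)| ^ n ∂P ≤
      2 * Real.exp (1 / 4) * n.factorial * (4 * L) ^ n := by
  have hcont : Continuous fun l : ℝ ↦ 2 * Real.exp (1 / 4) * n.factorial * (4 * l) ^ n := by
    fun_prop
  -- `L = 0` occurs (degenerate `X`), so pass to the limit `l ↓ L` in the case of positive `l`.
  refine ge_of_tendsto (hcont.continuousWithinAt (s := Set.Ioi L)) ?_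
  filter_upwards [self_mem_nhdsWithin] with l (hl : L < l)
  exact integral_abs_sum_sq_sub_gaussianReal_pow_le_of_pos hind hX (hL.trans_lt hl)
    (hv.trans (by gcongr)) n

end Independent

section InnerProductSpace

variable {E : Type*} [NormedAddCommGroup E] [InnerProductSpace ℝ E] [FiniteDimensional ℝ E]
  [MeasurableSpace E] [BorelSpace E]

lemma exists_orthonormalBasis_integral_inner_mul_inner_eq_zero {μ : Measure E}
    (hμ : MemLp id 2 μ) :
    ∃ b : OrthonormalBasis (Fin (finrank ℝ E)) ℝ E,
      ∀ i j, i ≠ j → ∫ x, ⟪b i, x⟫ * ⟪b j, x⟫ ∂μ = 0 := by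
  -- `covarianceOperator` is not centred: it represents the second moment form of `μ`.
  have hsymm := (isPositive_covarianceOperator (μ := μ)).isSymmetric
  refine ⟨hsymm.eigenvectorBasis rfl, fun i j hij ↦ ?_⟩
  have heig := hsymm.apply_eigenvectorBasis rfl i
  rw [ContinuousLinearMap.coe_coe] at heig
  rw [← covarianceOperator_inner hμ, heig, inner_smul_left,
    (hsymm.eigenvectorBasis rfl).inner_eq_zero hij, mul_zero]

variable {X : Ω → E} {M : ℝ}

lemma exists_orthonormalBasis_iIndepFun_inner (hX : HasGaussianLaw X P) (hmean : P[X] = 0) :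
    ∃ b : OrthonormalBasis (Fin (finrank ℝ E)) ℝ E, iIndepFun (fun i ω ↦ ⟪b i, X ω⟫) P := by
  have := hX.isProbabilityMeasure
  obtain ⟨b, hb⟩ := exists_orthonormalBasis_integral_inner_mul_inner_eq_zero
    ((memLp_map_measure_iff aestronglyMeasurable_id hX.aemeasurable).2 hX.memLp_two)
  have hmem (i) : MemLp (fun ω ↦ ⟪b i, X ω⟫) 2 P := hX.memLp_two.const_inner (b i)
  have hlaw : HasGaussianLaw (fun ω i ↦ ⟪b i, X ω⟫) P :=
    hX.map_fun (ContinuousLinearMap.pi fun i ↦ innerSL ℝ (b i))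
  refine ⟨b, hlaw.iIndepFun_of_covariance_eq_zero fun i j hij ↦ ?_⟩
  rw [covariance_eq_sub (hmem i) (hmem j), integral_inner hX.integrable, hmean, inner_zero_right,
    zero_mul, sub_zero, ← hb i j hij, integral_map hX.aemeasurable (by fun_prop)]
  rfl

theorem integral_abs_norm_sq_sub_integral_pow_le (hX : HasGaussianLaw X P) (hmean : P[X] = 0)
    (hM : 0 ≤ M) (hvar : ∀ v, Var[fun ω ↦ ⟪v, X ω⟫; P] ≤ M * ‖v‖ ^ 2) (n : ℕ) :
    ∫ ω, |‖X ω‖ ^ 2 - ∫ ω', ‖X ω'‖ ^ 2 ∂P| ^ n ∂P ≤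
      2 * Real.exp (1 / 4) * n.factorial * (4 * (M * √(finrank ℝ E))) ^ n := by
  obtain ⟨b, hind⟩ := exists_orthonormalBasis_iIndepFun_inner hX hmean
  have hgauss (i) : HasGaussianLaw (fun ω ↦ ⟪b i, X ω⟫) P := hX.map_fun (innerSL ℝ (b i))
  have hmean' (i) : ∫ ω, ⟪b i, X ω⟫ ∂P = 0 := by
    rw [integral_inner hX.integrable, hmean, inner_zero_right]
  have hlaw (i) : HasLaw (fun ω ↦ ⟪b i, X ω⟫)
      (gaussianReal 0 Var[fun ω ↦ ⟪b i, X ω⟫; P].toNNReal) P :=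
    ⟨(hgauss i).aemeasurable, by rw [(hgauss i).map_eq_gaussianReal, hmean']⟩
  have hvar' (i) : ((Var[fun ω ↦ ⟪b i, X ω⟫; P]).toNNReal : ℝ) = Var[fun ω ↦ ⟪b i, X ω⟫; P] :=
    Real.coe_toNNReal _ (variance_nonneg _ _)
  have hmean_sq : ∫ ω, ‖X ω‖ ^ 2 ∂P = ∑ i, Var[fun ω ↦ ⟪b i, X ω⟫; P] := by
    simp only [← b.sum_sq_inner_right]
    rw [integral_finsetSum _ fun i _ ↦ (hgauss i).memLp_two.integrable_sq]
    exact sum_congr rfl fun i _ ↦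
      (variance_of_integral_eq_zero (hgauss i).aemeasurable (hmean' i)).symm
  have hcentred (ω) : ‖X ω‖ ^ 2 - ∫ ω', ‖X ω'‖ ^ 2 ∂P =
      ∑ i, (⟪b i, X ω⟫ ^ 2 - (Var[fun ω ↦ ⟪b i, X ω⟫; P]).toNNReal) := by
    simp only [hmean_sq, hvar', sum_sub_distrib, b.sum_sq_inner_right]
  simp only [hcentred]
  refine integral_abs_sum_sq_sub_gaussianReal_pow_le hind hlaw (by positivity) ?_ n
  calc ∑ i, ((Var[fun ω ↦ ⟪b i, X ω⟫; P]).toNNReal : ℝ) ^ 2 ≤ ∑ _i : Fin (finrank ℝ E), M ^ 2 := by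
        gcongr with i
        simpa only [hvar', b.norm_eq_one, one_pow, mul_one] using hvar (b i)
    _ = (M * √(finrank ℝ E)) ^ 2 := by
        rw [mul_pow, Real.sq_sqrt (Nat.cast_nonneg _), sum_const, card_univ, Fintype.card_fin,
          nsmul_eq_mul, mul_comm]

end InnerProductSpace

lemma integrable_prod_of_memLp_card [IsFiniteMeasure P] {κ : Type*} [Fintype κ] {f : κ → Ω → ℝ}
    (hf : ∀ k, MemLp (f k) (Fintype.card κ) P) : Integrable (fun ω ↦ ∏ k, f k ω) P := by
  rcases isEmpty_or_nonempty κ with _ | _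
  · simp only [univ_eq_empty, prod_empty, integrable_const]
  · have hprod := MemLp.prod' (s := univ) fun k _ ↦ hf k
    rwa [sum_const, card_univ, nsmul_eq_mul,
      ENNReal.mul_inv_cancel (by simp) (ENNReal.natCast_ne_top _), inv_one,
      memLp_one_iff_integrable] at hprod

lemma sum_integral_prod_eq_integral_sum_pow [IsFiniteMeasure P] {ι : Type*} [Fintype ι]
    {f : ι → Ω → ℝ} {K : ℕ} (hf : ∀ i, MemLp (f i) K P) :
    ∑ i : Fin K → ι, ∫ ω, ∏ k, f (i k) ω ∂P = ∫ ω, (∑ i, f i ω) ^ K ∂P := by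
  simp only [Fintype.sum_pow]
  exact (integral_finsetSum _ fun i _ ↦ integrable_prod_of_memLp_card fun k ↦ by
    simpa only [Fintype.card_fin] using hf (i k)).symm

lemma memLp_sq {f : Ω → ℝ} {q : ℝ≥0∞} (hf : MemLp f (2 * q) P) :
    MemLp (fun ω ↦ f ω ^ 2) q P := by
  have : ENNReal.HolderTriple (2 * q) (2 * q) q := ⟨by
    rw [← two_mul, ENNReal.mul_inv (by simp) (by simp), ← mul_assoc,
      ENNReal.mul_inv_cancel (by simp) (by simp), one_mul]⟩
  simpa only [sq] using hf.mul' hf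

theorem abs_sum_integral_prod_sq_sub_variance_le {ι : Type*} [Fintype ι] {Z : Ω → ι → ℝ} {M : ℝ}
    (hZ : HasGaussianLaw Z P) (hmean : ∀ i, ∫ ω, Z ω i ∂P = 0) (hM : 0 ≤ M)
    (hvar : ∀ a : ι → ℝ, Var[fun ω ↦ ∑ i, a i * Z ω i; P] ≤ M * ∑ i, a i ^ 2) (K : ℕ) :
    |∑ i : Fin K → ι, ∫ ω, ∏ k, (Z ω (i k) ^ 2 - Var[fun ω ↦ Z ω (i k); P]) ∂P| ≤
      2 * Real.exp (1 / 4) * K.factorial * (4 * (M * √(Fintype.card ι))) ^ K := by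
  have := hZ.isProbabilityMeasure
  have hcoord (i : ι) : HasGaussianLaw (fun ω ↦ Z ω i) P := hZ.eval i
  have hmem (i : ι) : MemLp (fun ω ↦ Z ω i ^ 2 - Var[fun ω ↦ Z ω i; P]) K P :=
    (memLp_sq ((hcoord i).memLp (ENNReal.mul_ne_top (by simp) (by simp)))).sub (memLp_const _)
  let X : Ω → EuclideanSpace ℝ ι := fun ω ↦ WithLp.toLp 2 (Z ω)
  have hX : HasGaussianLaw X P := hZ.toLp_pi 2
  have hX_mean : P[X] = 0 := by
    ext i
    rw [eval_integral_piLp fun i ↦ (hcoord i).integrable]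
    exact hmean i
  have hX_var (v : EuclideanSpace ℝ ι) : Var[fun ω ↦ ⟪v, X ω⟫; P] ≤ M * ‖v‖ ^ 2 := by
    simpa [X, PiLp.inner_apply, EuclideanSpace.real_norm_sq_eq, mul_comm] using hvar v.ofLp
  have hcentred (ω) : ∑ i, (Z ω i ^ 2 - Var[fun ω ↦ Z ω i; P]) =
      ‖X ω‖ ^ 2 - ∫ ω', ‖X ω'‖ ^ 2 ∂P := by
    simp only [X, EuclideanSpace.real_norm_sq_eq, sum_sub_distrib,
      variance_of_integral_eq_zero (hcoord _).aemeasurable (hmean _)]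
    rw [integral_finsetSum _ fun i _ ↦ (hcoord i).memLp_two.integrable_sq]
  calc |∑ i : Fin K → ι, ∫ ω, ∏ k, (Z ω (i k) ^ 2 - Var[fun ω ↦ Z ω (i k); P]) ∂P|
      = |∫ ω, (‖X ω‖ ^ 2 - ∫ ω', ‖X ω'‖ ^ 2 ∂P) ^ K ∂P| := by
        rw [sum_integral_prod_eq_integral_sum_pow hmem]
        simp only [hcentred]
    _ ≤ ∫ ω, |‖X ω‖ ^ 2 - ∫ ω', ‖X ω'‖ ^ 2 ∂P| ^ K ∂P := by
        simp only [← abs_pow]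
        exact abs_integral_le_integral_abs
    _ ≤ _ := by
        simpa only [finrank_euclideanSpace] using
          integral_abs_norm_sq_sub_integral_pow_le hX hX_mean hM hX_var K

end Moments

namespace IsGaussianVec

variable {Ω : Type*} [MeasureSpace Ω] {p : ℕ} {Z : Ω → Fin p → ℝ} {S : Matrix (Fin p) (Fin p) ℝ}

lemma hasLaw_sum (hZ : IsGaussianVec Z S) (a : Fin p → ℝ) :
    HasLaw (fun ω ↦ ∑ i, a i * Z ω i)
      (gaussianReal 0 (∑ i, ∑ j, a i * S i j * a j).toNNReal) where
  aemeasurable := aemeasurable_of_map_neZero (by rw [hZ a]; infer_instance)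
  map_eq := hZ a

lemma hasLaw_eval (hZ : IsGaussianVec Z S) (i : Fin p) :
    HasLaw (fun ω ↦ Z ω i) (gaussianReal 0 (S i i).toNNReal) := by
  simpa [Pi.single_apply] using hZ.hasLaw_sum (Pi.single i 1)

lemma hasGaussianLaw (hZ : IsGaussianVec Z S) : HasGaussianLaw Z ℙ where
  isGaussian_map := isGaussian_of_map_eq_gaussianReal fun L ↦ by
    have hZ_meas : AEMeasurable Z :=
      aemeasurable_pi_lambda _ fun i ↦ (hZ.hasLaw_eval i).aemeasurable
    obtain ⟨a, ha⟩ : ∃ a : Fin p → ℝ, ∀ z, L z = ∑ i, a i * z i :=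
      ⟨fun i ↦ L fun j ↦ if i = j then 1 else 0, fun z ↦ by
        simpa only [mul_comm, smul_eq_mul, ContinuousLinearMap.coe_coe] using
          L.toLinearMap.pi_apply_eq_sum_univ z⟩
    have hmap : Measure.map L (Measure.map Z ℙ) = Measure.map (fun ω ↦ ∑ i, a i * Z ω i) ℙ := by
      rw [AEMeasurable.map_map_of_aemeasurable (by fun_prop) hZ_meas]
      simp only [Function.comp_def, ha]
    exact ⟨0, _, hmap.trans (hZ a)⟩

lemma integral_eval (hZ : IsGaussianVec Z S) (i : Fin p) : ∫ ω, Z ω i = 0 := by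
  rw [(hZ.hasLaw_eval i).integral_eq, integral_id_gaussianReal]

lemma variance_sum (hZ : IsGaussianVec Z S) {a : Fin p → ℝ}
    (ha : 0 ≤ ∑ i, ∑ j, a i * S i j * a j) :
    Var[fun ω ↦ ∑ i, a i * Z ω i] = ∑ i, ∑ j, a i * S i j * a j := by
  rw [(hZ.hasLaw_sum a).variance_eq, variance_id_gaussianReal, Real.coe_toNNReal _ ha]

lemma variance_eval (hZ : IsGaussianVec Z S) {i : Fin p} (hi : 0 ≤ S i i) :
    Var[fun ω ↦ Z ω i] = S i i := by
  rw [(hZ.hasLaw_eval i).variance_eq, variance_id_gaussianReal, Real.coe_toNNReal _ hi]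

end IsGaussianVec

lemma sqrt_pow_eq_pow_half {x : ℝ} (hx : 0 ≤ x) {n : ℕ} (hn : Even n) : √x ^ n = x ^ (n / 2) := by
  rw [← Nat.two_mul_div_two_of_even hn, pow_mul, Real.sq_sqrt hx,
    Nat.mul_div_cancel_left _ two_pos]

theorem stmt1_general {Ω : Type*} [MeasureSpace Ω] {p : ℕ} {Z : Ω → Fin p → ℝ}
    {S : Matrix (Fin p) (Fin p) ℝ} {M₀ : ℝ} (hZ : IsGaussianVec Z S) (hM₀ : 0 ≤ M₀)
    (hpsd : ∀ v : Fin p → ℝ, 0 ≤ ∑ i, ∑ j, v i * S i j * v j)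
    (hbound : ∀ v : Fin p → ℝ, ∑ i, ∑ j, v i * S i j * v j ≤ M₀ * ∑ i, v i ^ 2) (K : ℕ) :
    |∑ i : Fin K → Fin p, ∫ ω, ∏ k, (Z ω (i k) ^ 2 - S (i k) (i k))| ≤
      2 * Real.exp (1 / 4) * K.factorial * (4 * M₀) ^ K * √p ^ K := by
  have hdiag (i : Fin p) : 0 ≤ S i i := by simpa [Pi.single_apply] using hpsd (Pi.single i 1)
  have hvar (v : Fin p → ℝ) : Var[fun ω ↦ ∑ i, v i * Z ω i] ≤ M₀ * ∑ i, v i ^ 2 :=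
    (hZ.variance_sum (hpsd v)).trans_le (hbound v)
  have hmoment := abs_sum_integral_prod_sq_sub_variance_le hZ.hasGaussianLaw hZ.integral_eval
    hM₀ hvar K
  simpa only [hZ.variance_eval (hdiag _), Fintype.card_fin, ← mul_assoc, mul_pow] using hmoment

/-- For `Z ∼ N_p(0,Σ)` with `Σ` in the bandable class `𝓕_α` (largest eigenvalue
at most `M₀` and column-wise off-band decay `Mk^{-α}`), for any even `K₀ ≥ 2`
there is `C = C(K₀, M, M₀)` with
`∑_{i₁,…,i_{K₀}} 𝔼 ∏ (z_{i_k}² − σ_{i_k i_k}) ≤ C p^{K₀/2}`. -/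
theorem stmt1 (K₀ : ℕ) (hK : 2 ≤ K₀) (hKeven : Even K₀)
    (M M₀ α : ℝ) (hM : 0 < M) (hM₀ : 0 < M₀) (hα : 0 < α) :
    ∃ C : ℝ, 0 < C ∧
      ∀ (p : ℕ) (S : Matrix (Fin p) (Fin p) ℝ), S.IsSymm →
        (∀ v : Fin p → ℝ, 0 ≤ ∑ i, ∑ j, v i * S i j * v j) →
        (∀ v : Fin p → ℝ, ∑ i, ∑ j, v i * S i j * v j ≤ M₀ * ∑ i, v i ^ 2) →
        (∀ k : ℕ, 1 ≤ k → ∀ j : Fin p,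
            ∑ i ∈ Finset.univ.filter
                (fun i : Fin p => k < ((i : ℤ) - (j : ℤ)).natAbs),
              |S i j| ≤ M * (k : ℝ) ^ (-α)) →
        ∀ (Ω : Type) (_ : MeasureSpace Ω)
          (_ : IsProbabilityMeasure (ℙ : Measure Ω))
          (Z : Ω → Fin p → ℝ), Measurable Z → IsGaussianVec Z S →
        ∑ i : Fin K₀ → Fin p,
            (∫ ω, ∏ k, (Z ω (i k) ^ 2 - S (i k) (i k)) ∂ℙ)
          ≤ C * (p : ℝ) ^ (K₀ / 2) := by
  refine ⟨2 * Real.exp (1 / 4) * K₀.factorial * (4 * M₀) ^ K₀, by positivity, ?_⟩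
  intro p S _ hpsd hbound _ Ω _ _ Z _ hZ
  rw [← sqrt_pow_eq_pow_half (Nat.cast_nonneg p) hKeven]
  exact (le_abs_self _).trans (stmt1_general hZ hM₀.le hpsd hbound K₀)
end
end

section
/- Let $\{d_i, \mathcal{F}_i\}$ be a martingale difference sequence with $\mathbb{E}(d_i \mid \mathcal{F}_{i-1}) = 0$. Then for any real $K_0 \ge 2$ and $n \ge 1$, $\mathbb{E}\big|\sum_{i=1}^n d_i\big|^{K_0} \le L_{K_0}\, n^{K_0/2 - 1} \sum_{i=1}^n \mathbb{E}|d_i|^{K_0}$, where $L_{K_0} = \{8(K_0-1)\max(1, 2^{K_0-3})\}^{K_0}$. -/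
/-!
Write `‖·‖_p` for the `Lᵖ` norm. The heart of the matter is the one-step bound
`‖S + d‖_p ^ 2 ≤ ‖S‖_p ^ 2 + (2 (p - 1)) ^ 2 ‖d‖_p ^ 2` when `S` is `m`-measurable and
`𝔼[d | m] = 0`: summing it over the differences and applying the power mean inequality gives the
theorem. For the one-step bound, the convexity of `‖·‖ ^ p` and the local Lipschitz property of its
gradient give
`‖x + y‖ ^ p ≤ ‖x‖ ^ p + p ‖x‖ ^ (p - 2) ⟪x, y⟫ + p (p - 1) (‖x‖ + ‖y‖) ^ (p - 2) ‖y‖ ^ 2`.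
At `x = S`, `y = d` the middle term has mean zero, and by the Hölder and Minkowski inequalities the
last one has mean at most `p (p - 1) (‖S‖_p + ‖d‖_p) ^ (p - 2) ‖d‖_p ^ 2`. Added to `‖S‖_p ^ p`,
this does not exceed `(‖S‖_p ^ 2 + (2 (p - 1)) ^ 2 ‖d‖_p ^ 2) ^ (p / 2)`.
-/

open MeasureTheory Finset

noncomputable section

open scoped ENNReal NNReal RealInnerProductSpace

section RealInequalities

lemma add_one_mul_rpow_mul_le {r a b : ℝ} (hr : 0 ≤ r) (ha : 0 ≤ a) (hb : 0 ≤ b) :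
    (r + 1) * (a ^ r * b) ≤ r * a ^ (r + 1) + b ^ (r + 1) := by
  have hr1 : 0 < r + 1 := by linarith
  have young := Real.geom_mean_le_arith_mean2_weighted (w₁ := r / (r + 1)) (w₂ := 1 / (r + 1))
    (p₁ := a ^ (r + 1)) (p₂ := b ^ (r + 1)) (by positivity) (by positivity) (by positivity)
    (by positivity) (by field_simp)
  rw [← Real.rpow_mul ha, ← Real.rpow_mul hb, mul_div_cancel₀ _ hr1.ne', mul_one_div_cancel hr1.ne',
    Real.rpow_one] at young
  calc (r + 1) * (a ^ r * b)
      ≤ (r + 1) * (r / (r + 1) * a ^ (r + 1) + 1 / (r + 1) * b ^ (r + 1)) := by gcongr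
    _ = r * a ^ (r + 1) + b ^ (r + 1) := by field_simp

lemma one_add_inv_rpow_le_two {p : ℝ} (hp : 2 ≤ p) : (1 + p⁻¹) ^ (p / 2 - 1) ≤ 2 := by
  have : 0 < p := by linarith
  have hexp : Real.exp (1 / 2) ≤ 2 := by
    refine le_of_sq_le_sq ?_ zero_le_two
    rw [← Real.exp_nat_mul]
    norm_num
    linarith [Real.exp_one_lt_three]
  calc (1 + p⁻¹) ^ (p / 2 - 1) ≤ Real.exp p⁻¹ ^ (p / 2 - 1) := by
        gcongr
        · linarith
        · linarith [Real.add_one_le_exp p⁻¹]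
    _ = Real.exp (1 / 2 - p⁻¹) := by
        rw [← Real.exp_mul]
        congr 1
        field_simp
    _ ≤ Real.exp (1 / 2) := Real.exp_le_exp.2 (sub_le_self _ (by positivity))
    _ ≤ 2 := hexp

lemma add_rpow_sub_two_le {p s t : ℝ} (hp : 2 ≤ p) (hs : 0 ≤ s) (ht : 0 ≤ t) :
    (s + t) ^ (p - 2) ≤ 2 * (s ^ 2 + p * t ^ 2) ^ (p / 2 - 1) := by
  have : 0 < p := by linarith
  have hsq : (s + t) ^ 2 ≤ (1 + p⁻¹) * (s ^ 2 + p * t ^ 2) := by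
    have key : 0 ≤ p⁻¹ * (s - p * t) ^ 2 := by positivity
    have expand : p⁻¹ * (s - p * t) ^ 2 = (1 + p⁻¹) * (s ^ 2 + p * t ^ 2) - (s + t) ^ 2 := by
      field_simp
      ring
    linarith
  calc (s + t) ^ (p - 2) = ((s + t) ^ 2) ^ (p / 2 - 1) := by
        rw [← Real.rpow_natCast_mul (by positivity)]
        congr 1
        push_cast
        ring
    _ ≤ ((1 + p⁻¹) * (s ^ 2 + p * t ^ 2)) ^ (p / 2 - 1) := by
        gcongr
        linarith
    _ = (1 + p⁻¹) ^ (p / 2 - 1) * (s ^ 2 + p * t ^ 2) ^ (p / 2 - 1) :=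
        Real.mul_rpow (by positivity) (by positivity)
    _ ≤ 2 * (s ^ 2 + p * t ^ 2) ^ (p / 2 - 1) := by
        gcongr
        exact one_add_inv_rpow_le_two hp

lemma rpow_add_mul_add_rpow_mul_sq_le {p s t : ℝ} (hp : 2 ≤ p) (hs : 0 ≤ s) (ht : 0 ≤ t) :
    s ^ p + p * (p - 1) * ((s + t) ^ (p - 2) * t ^ 2) ≤
      (s ^ 2 + (2 * (p - 1)) ^ 2 * t ^ 2) ^ (p / 2) := by
  have hp1 : 0 ≤ p - 1 := by linarith
  have hexp : 0 ≤ p / 2 - 1 := by linarith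
  set W := s ^ 2 + (2 * (p - 1)) ^ 2 * t ^ 2 with hW
  have hW0 : 0 ≤ W := by positivity
  have hs_le : s ^ p ≤ s ^ 2 * W ^ (p / 2 - 1) := by
    calc s ^ p = s ^ 2 * (s ^ 2) ^ (p / 2 - 1) := by
          rw [← Real.rpow_natCast_mul hs, ← Real.rpow_natCast, ← Real.rpow_add_of_nonneg hs
            (by positivity) (by positivity)]
          congr 1
          push_cast
          ring
      _ ≤ s ^ 2 * W ^ (p / 2 - 1) := by
          gcongr
          exact le_add_of_nonneg_right (by positivity)
  have hst_le : (s + t) ^ (p - 2) ≤ 2 * W ^ (p / 2 - 1) := by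
    refine (add_rpow_sub_two_le hp hs ht).trans ?_
    rw [hW]
    gcongr
    nlinarith
  calc s ^ p + p * (p - 1) * ((s + t) ^ (p - 2) * t ^ 2)
      ≤ s ^ 2 * W ^ (p / 2 - 1) + p * (p - 1) * (2 * W ^ (p / 2 - 1) * t ^ 2) := by gcongr
    _ = W ^ (p / 2 - 1) * (s ^ 2 + 2 * p * (p - 1) * t ^ 2) := by ring
    _ ≤ W ^ (p / 2 - 1) * W := by
        rw [hW]
        gcongr
        nlinarith
    _ = W ^ (p / 2) := by rw [← Real.rpow_add_one' hW0 (by linarith), sub_add_cancel]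

end RealInequalities

section PowerOfNorm

lemma norm_rpow_smul_sub_norm_rpow_smul_le {E : Type*} [NormedAddCommGroup E] [NormedSpace ℝ E]
    {r : ℝ} (hr : 0 ≤ r) (x y : E) :
    ‖‖x‖ ^ r • x - ‖y‖ ^ r • y‖ ≤ (r + 1) * max ‖x‖ ‖y‖ ^ r * ‖x - y‖ := by
  wlog hyx : ‖y‖ ≤ ‖x‖ generalizing x y
  · rw [norm_sub_rev, norm_sub_rev x, max_comm]
    exact this y x (le_of_not_ge hyx)
  have hpow : ‖y‖ ^ r ≤ ‖x‖ ^ r := by gcongr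
  have hr1 : r + 1 ≠ 0 := by linarith
  have radial : (‖x‖ ^ r - ‖y‖ ^ r) * ‖y‖ ≤ r * ‖x‖ ^ r * ‖x - y‖ := by
    have young := add_one_mul_rpow_mul_le hr (norm_nonneg x) (norm_nonneg y)
    rw [Real.rpow_add_one' (norm_nonneg x) hr1, Real.rpow_add_one' (norm_nonneg y) hr1] at young
    calc (‖x‖ ^ r - ‖y‖ ^ r) * ‖y‖ ≤ r * ‖x‖ ^ r * (‖x‖ - ‖y‖) := by linarith
      _ ≤ r * ‖x‖ ^ r * ‖x - y‖ := by
          gcongr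
          exact norm_sub_norm_le x y
  calc ‖‖x‖ ^ r • x - ‖y‖ ^ r • y‖ = ‖‖x‖ ^ r • (x - y) + (‖x‖ ^ r - ‖y‖ ^ r) • y‖ := by
        congr 1
        module
    _ ≤ ‖x‖ ^ r * ‖x - y‖ + (‖x‖ ^ r - ‖y‖ ^ r) * ‖y‖ := by
        refine (norm_add_le _ _).trans_eq ?_
        rw [norm_smul, norm_smul, Real.norm_of_nonneg (by positivity),
          Real.norm_of_nonneg (sub_nonneg.2 hpow)]
    _ ≤ ‖x‖ ^ r * ‖x - y‖ + r * ‖x‖ ^ r * ‖x - y‖ := by gcongr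
    _ = (r + 1) * max ‖x‖ ‖y‖ ^ r * ‖x - y‖ := by
        rw [max_eq_left hyx]
        ring

variable {E : Type*} [NormedAddCommGroup E] [InnerProductSpace ℝ E] {p : ℝ}

lemma norm_rpow_le_norm_rpow_add_inner (hp : 2 ≤ p) (x y : E) :
    ‖x‖ ^ p ≤ ‖y‖ ^ p + p * ⟪‖x‖ ^ (p - 2) • x, x - y⟫ := by
  have young := add_one_mul_rpow_mul_le (r := p - 1) (by linarith) (norm_nonneg x) (norm_nonneg y)
  rw [sub_add_cancel] at young
  have hpow : ‖x‖ ^ (p - 1) = ‖x‖ ^ (p - 2) * ‖x‖ := by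
    rw [← Real.rpow_add_one' (norm_nonneg x) (by linarith)]
    ring_nf
  have hself : ⟪‖x‖ ^ (p - 2) • x, x⟫ = ‖x‖ ^ p := by
    rw [real_inner_smul_left, real_inner_self_eq_norm_mul_norm, ← mul_assoc, ← hpow,
      ← Real.rpow_add_one' (norm_nonneg x) (by linarith), sub_add_cancel]
  have hcross : ⟪‖x‖ ^ (p - 2) • x, y⟫ ≤ ‖x‖ ^ (p - 1) * ‖y‖ := by
    rw [real_inner_smul_left, hpow, mul_assoc]
    gcongr
    exact real_inner_le_norm x y
  rw [inner_sub_right, hself]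
  nlinarith

lemma norm_add_rpow_le (hp : 2 ≤ p) (x y : E) :
    ‖x + y‖ ^ p ≤ ‖x‖ ^ p + p * ⟪‖x‖ ^ (p - 2) • x, y⟫ +
      p * (p - 1) * ((‖x‖ + ‖y‖) ^ (p - 2) * ‖y‖ ^ 2) := by
  have hp1 : 0 ≤ p - 1 := by linarith
  have convex := norm_rpow_le_norm_rpow_add_inner hp (x + y) x
  rw [add_sub_cancel_left] at convex
  have gradient : ‖‖x + y‖ ^ (p - 2) • (x + y) - ‖x‖ ^ (p - 2) • x‖ ≤
      (p - 1) * (‖x‖ + ‖y‖) ^ (p - 2) * ‖y‖ := by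
    have hmax : max ‖x + y‖ ‖x‖ ≤ ‖x‖ + ‖y‖ :=
      max_le (norm_add_le x y) (le_add_of_nonneg_right (norm_nonneg y))
    have lipschitz := norm_rpow_smul_sub_norm_rpow_smul_le (r := p - 2) (by linarith) (x + y) x
    rw [add_sub_cancel_left, show p - 2 + 1 = p - 1 by ring] at lipschitz
    exact lipschitz.trans (by gcongr)
  have remainder : ⟪‖x + y‖ ^ (p - 2) • (x + y) - ‖x‖ ^ (p - 2) • x, y⟫ ≤
      (p - 1) * ((‖x‖ + ‖y‖) ^ (p - 2) * ‖y‖ ^ 2) :=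
    calc _ ≤ (p - 1) * (‖x‖ + ‖y‖) ^ (p - 2) * ‖y‖ * ‖y‖ :=
          (real_inner_le_norm _ _).trans (by gcongr)
      _ = _ := by ring
  rw [inner_sub_left] at remainder
  nlinarith

end PowerOfNorm

section Holder

variable {Ω E F : Type*} {m0 : MeasurableSpace Ω} {μ : Measure Ω} [NormedAddCommGroup E]
  [NormedAddCommGroup F] {f : Ω → E} {g : Ω → F} {p : ℝ≥0} {α β : ℝ}

lemma lintegral_enorm_rpow_mul_enorm_rpow_le (hf : AEStronglyMeasurable f μ)
    (hg : AEStronglyMeasurable g μ) (hp : p ≠ 0) (hα : 0 ≤ α) (hβ : 0 ≤ β) (hαβ : α + β = p) :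
    ∫⁻ ω, ‖f ω‖ₑ ^ α * ‖g ω‖ₑ ^ β ∂μ ≤ eLpNorm f p μ ^ α * eLpNorm g p μ ^ β := by
  have hp0 : (p : ℝ) ≠ 0 := by exact_mod_cast hp
  have holder := ENNReal.lintegral_mul_norm_pow_le (μ := μ) (hf.enorm.pow_const (p : ℝ))
    (hg.enorm.pow_const (p : ℝ)) (p := α / p) (q := β / p) (by positivity) (by positivity)
    (by rw [← add_div, hαβ, div_self hp0])
  simpa only [← eLpNorm_nnreal_pow_eq_lintegral hp, ← ENNReal.rpow_mul, mul_div_cancel₀ _ hp0]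
    using holder

lemma lintegral_enorm_norm_rpow_mul_norm_rpow (hα : 0 ≤ α) (hβ : 0 ≤ β) :
    ∫⁻ ω, ‖‖f ω‖ ^ α * ‖g ω‖ ^ β‖ₑ ∂μ = ∫⁻ ω, ‖f ω‖ₑ ^ α * ‖g ω‖ₑ ^ β ∂μ := by
  simp only [enorm_mul, Real.enorm_rpow_of_nonneg (norm_nonneg _), hα, hβ, enorm_norm]

lemma integrable_norm_rpow_mul_norm_rpow (hf : MemLp f p μ) (hg : MemLp g p μ) (hp : p ≠ 0)
    (hα : 0 ≤ α) (hβ : 0 ≤ β) (hαβ : α + β = p) :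
    Integrable (fun ω ↦ ‖f ω‖ ^ α * ‖g ω‖ ^ β) μ := by
  refine ⟨((hf.1.norm.aemeasurable.pow_const α).mul
    (hg.1.norm.aemeasurable.pow_const β)).aestronglyMeasurable, ?_⟩
  rw [HasFiniteIntegral, lintegral_enorm_norm_rpow_mul_norm_rpow hα hβ]
  exact (lintegral_enorm_rpow_mul_enorm_rpow_le hf.1 hg.1 hp hα hβ hαβ).trans_lt
    (ENNReal.mul_lt_top (ENNReal.rpow_lt_top_of_nonneg hα hf.eLpNorm_ne_top)
      (ENNReal.rpow_lt_top_of_nonneg hβ hg.eLpNorm_ne_top))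

lemma integral_norm_rpow_mul_norm_rpow_le (hf : MemLp f p μ) (hg : MemLp g p μ) (hp : p ≠ 0)
    (hα : 0 ≤ α) (hβ : 0 ≤ β) (hαβ : α + β = p) :
    ∫ ω, ‖f ω‖ ^ α * ‖g ω‖ ^ β ∂μ ≤ lpNorm f p μ ^ α * lpNorm g p μ ^ β := by
  have bound := ENNReal.toReal_mono (ENNReal.mul_ne_top
      (ENNReal.rpow_ne_top_of_nonneg hα hf.eLpNorm_ne_top)
      (ENNReal.rpow_ne_top_of_nonneg hβ hg.eLpNorm_ne_top))
    (lintegral_enorm_rpow_mul_enorm_rpow_le hf.1 hg.1 hp hα hβ hαβ)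
  rw [ENNReal.toReal_mul, ← ENNReal.toReal_rpow, ← ENNReal.toReal_rpow, toReal_eLpNorm hf.1,
    toReal_eLpNorm hg.1, ← lintegral_enorm_norm_rpow_mul_norm_rpow hα hβ,
    ← integral_norm_eq_lintegral_enorm
      (integrable_norm_rpow_mul_norm_rpow hf hg hp hα hβ hαβ).aestronglyMeasurable] at bound
  exact (integral_mono_of_nonneg (ae_of_all _ fun ω ↦ by positivity)
    (integrable_norm_rpow_mul_norm_rpow hf hg hp hα hβ hαβ).norm
    (ae_of_all _ fun ω ↦ Real.le_norm_self _)).trans bound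

lemma integrable_norm_add_norm_rpow_mul_norm_rpow (hf : MemLp f p μ) (hg : MemLp g p μ)
    (hp : p ≠ 0) (hα : 0 ≤ α) (hβ : 0 ≤ β) (hαβ : α + β = p) :
    Integrable (fun ω ↦ (‖f ω‖ + ‖g ω‖) ^ α * ‖g ω‖ ^ β) μ := by
  have h := integrable_norm_rpow_mul_norm_rpow (hf.norm.add hg.norm) hg hp hα hβ hαβ
  simpa only [Pi.add_apply, Real.norm_of_nonneg (add_nonneg (norm_nonneg _) (norm_nonneg _))]
    using h

lemma integral_norm_add_norm_rpow_mul_norm_rpow_le (hf : MemLp f p μ) (hg : MemLp g p μ)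
    (hp : 1 ≤ p) (hα : 0 ≤ α) (hβ : 0 ≤ β) (hαβ : α + β = p) :
    ∫ ω, (‖f ω‖ + ‖g ω‖) ^ α * ‖g ω‖ ^ β ∂μ ≤
      (lpNorm f p μ + lpNorm g p μ) ^ α * lpNorm g p μ ^ β := by
  have holder := integral_norm_rpow_mul_norm_rpow_le (hf.norm.add hg.norm) hg (by positivity)
    hα hβ hαβ
  have minkowski := lpNorm_add_le (g := fun ω ↦ ‖g ω‖) hf.norm (by exact_mod_cast hp)
  rw [lpNorm_norm hf.1, lpNorm_norm hg.1] at minkowski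
  simp only [Pi.add_apply, Real.norm_of_nonneg (add_nonneg (norm_nonneg _) (norm_nonneg _))]
    at holder
  exact holder.trans (mul_le_mul_of_nonneg_right (Real.rpow_le_rpow lpNorm_nonneg minkowski hα)
    (Real.rpow_nonneg lpNorm_nonneg β))

lemma lpNorm_rpow_eq_integral_norm_rpow (hp : p ≠ 0) (hf : AEStronglyMeasurable f μ) :
    lpNorm f p μ ^ (p : ℝ) = ∫ ω, ‖f ω‖ ^ (p : ℝ) ∂μ := by
  rw [lpNorm_nnreal_eq_integral_norm_rpow hp hf, Real.rpow_inv_rpow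
    (integral_nonneg fun ω ↦ by positivity) (by exact_mod_cast hp)]

lemma lintegral_ofReal_norm_rpow_eq_eLpNorm_rpow (hp : p ≠ 0) :
    ∫⁻ ω, ENNReal.ofReal (‖f ω‖ ^ (p : ℝ)) ∂μ = eLpNorm f p μ ^ (p : ℝ) := by
  simp only [eLpNorm_nnreal_pow_eq_lintegral hp, ← ofReal_norm,
    ENNReal.ofReal_rpow_of_nonneg (norm_nonneg _) p.coe_nonneg]

end Holder

section MartingaleDifference

variable {Ω E : Type*} {m m0 : MeasurableSpace Ω} {μ : Measure Ω} [NormedAddCommGroup E]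
  [InnerProductSpace ℝ E] {f g : Ω → E} {p : ℝ≥0}

lemma integrable_inner_norm_rpow_smul (hp : 2 ≤ p) (hf : MemLp f p μ) (hg : MemLp g p μ) :
    Integrable (fun ω ↦ ⟪‖f ω‖ ^ (p - 2 : ℝ) • f ω, g ω⟫) μ := by
  have : (2 : ℝ) ≤ p := by exact_mod_cast hp
  refine (integrable_norm_rpow_mul_norm_rpow (α := p - 1) (β := 1) hf hg (by positivity)
    (by linarith) zero_le_one (by ring)).mono'
    (((hf.1.norm.aemeasurable.pow_const _).aestronglyMeasurable.smul hf.1).inner hg.1)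
    (ae_of_all _ fun ω ↦ (norm_inner_le_norm _ _).trans_eq ?_)
  rw [norm_smul, Real.norm_of_nonneg (by positivity), Real.rpow_one,
    ← Real.rpow_add_one' (norm_nonneg _) (by linarith)]
  ring_nf

lemma integral_inner_eq_zero_of_condExp_ae_eq_zero [CompleteSpace E] (hm : m ≤ m0)
    [SigmaFinite (μ.trim hm)] (hf : StronglyMeasurable[m] f) (hg : Integrable g μ)
    (hfg : Integrable (fun ω ↦ ⟪f ω, g ω⟫) μ) (hg0 : μ[g | m] =ᵐ[μ] 0) :
    ∫ ω, ⟪f ω, g ω⟫ ∂μ = 0 := by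
  have pullOut : μ[fun ω ↦ ⟪f ω, g ω⟫ | m] =ᵐ[μ] fun ω ↦ ⟪f ω, μ[g | m] ω⟫ :=
    condExp_bilin_of_stronglyMeasurable_left (innerSL ℝ) hf hfg hg
  rw [← integral_condExp hm]
  refine integral_eq_zero_of_ae ?_
  filter_upwards [pullOut, hg0] with ω hω hω0
  rw [hω, hω0, Pi.zero_apply, inner_zero_right, Pi.zero_apply]

lemma lpNorm_add_rpow_le_of_condExp_ae_eq_zero [CompleteSpace E] (hm : m ≤ m0)
    [SigmaFinite (μ.trim hm)] (hp : 2 ≤ p) (hf : StronglyMeasurable[m] f) (hfp : MemLp f p μ)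
    (hg : Integrable g μ) (hgp : MemLp g p μ) (hg0 : μ[g | m] =ᵐ[μ] 0) :
    lpNorm (f + g) p μ ^ (p : ℝ) ≤ lpNorm f p μ ^ (p : ℝ) +
      p * (p - 1) * ((lpNorm f p μ + lpNorm g p μ) ^ (p - 2 : ℝ) * lpNorm g p μ ^ 2) := by
  have hp' : (2 : ℝ) ≤ p := by exact_mod_cast hp
  have hp0 : p ≠ 0 := by positivity
  have hp1 : (0 : ℝ) ≤ p - 1 := by linarith
  have hp2 : (0 : ℝ) ≤ p - 2 := by linarith
  have f_int : Integrable (fun ω ↦ ‖f ω‖ ^ (p : ℝ)) μ :=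
    hfp.integrable_norm_rpow (by simpa using hp0) ENNReal.coe_ne_top
  have fg_int : Integrable (fun ω ↦ ‖(f + g) ω‖ ^ (p : ℝ)) μ :=
    (hfp.add hgp).integrable_norm_rpow (by simpa using hp0) ENNReal.coe_ne_top
  have inner_int := integrable_inner_norm_rpow_smul hp hfp hgp
  have inner_zero : ∫ ω, ⟪‖f ω‖ ^ (p - 2 : ℝ) • f ω, g ω⟫ ∂μ = 0 :=
    integral_inner_eq_zero_of_condExp_ae_eq_zero hm
      ((hf.norm.measurable.pow_const _).stronglyMeasurable.smul hf) hg inner_int hg0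
  have rem_int := integrable_norm_add_norm_rpow_mul_norm_rpow hfp hgp hp0 hp2 zero_le_two
    (sub_add_cancel _ _)
  have rem_le := integral_norm_add_norm_rpow_mul_norm_rpow_le hfp hgp (one_le_two.trans hp) hp2
    zero_le_two (sub_add_cancel _ _)
  simp only [Real.rpow_two] at rem_int rem_le
  rw [lpNorm_rpow_eq_integral_norm_rpow hp0 (hfp.add hgp).1,
    lpNorm_rpow_eq_integral_norm_rpow hp0 hfp.1]
  have main_int := f_int.add (inner_int.const_mul (p : ℝ))
  have pointwise := integral_mono fg_int (main_int.add (rem_int.const_mul (p * (p - 1) : ℝ)))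
    fun ω ↦ norm_add_rpow_le hp' (f ω) (g ω)
  rw [integral_add' main_int (rem_int.const_mul _), integral_add' f_int (inner_int.const_mul _),
    integral_const_mul, integral_const_mul, inner_zero, mul_zero, add_zero] at pointwise
  exact pointwise.trans (by gcongr)

lemma eLpNorm_add_sq_le_of_condExp_ae_eq_zero [CompleteSpace E] (hm : m ≤ m0)
    [SigmaFinite (μ.trim hm)] (hp : 2 ≤ p) (hf : StronglyMeasurable[m] f) (hg : Integrable g μ)
    (hg0 : μ[g | m] =ᵐ[μ] 0) :
    eLpNorm (f + g) p μ ^ 2 ≤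
      eLpNorm f p μ ^ 2 + ENNReal.ofReal (2 * (p - 1)) ^ 2 * eLpNorm g p μ ^ 2 := by
  have hp' : (2 : ℝ) ≤ p := by exact_mod_cast hp
  have hp1 : (0 : ℝ) < 2 * (p - 1) := by linarith
  by_cases hfp : MemLp f p μ
  swap
  · have : eLpNorm f p μ = ⊤ := by_contra fun h ↦
      hfp ⟨(hf.mono hm).aestronglyMeasurable, lt_top_iff_ne_top.2 h⟩
    simp [this]
  by_cases hgp : MemLp g p μ
  swap
  · have : eLpNorm g p μ = ⊤ := by_contra fun h ↦ hgp ⟨hg.1, lt_top_iff_ne_top.2 h⟩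
    rw [this, ENNReal.top_pow two_ne_zero, ENNReal.mul_top (by simpa using hp1), add_top]
    exact le_top
  have key : lpNorm (f + g) p μ ^ 2 ≤
      lpNorm f p μ ^ 2 + (2 * (p - 1)) ^ 2 * lpNorm g p μ ^ 2 := by
    rw [← Real.rpow_le_rpow_iff (z := p / 2) (by positivity) (by positivity) (by positivity),
      ← Real.rpow_natCast_mul lpNorm_nonneg, Nat.cast_ofNat, mul_div_cancel₀ _ two_ne_zero]
    exact (lpNorm_add_rpow_le_of_condExp_ae_eq_zero hm hp hf hfp hg hgp hg0).trans
      (rpow_add_mul_add_rpow_mul_sq_le hp' lpNorm_nonneg lpNorm_nonneg)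
  rw [← ofReal_lpNorm (hfp.add hgp), ← ofReal_lpNorm hfp, ← ofReal_lpNorm hgp, ← mul_pow,
    ← ENNReal.ofReal_mul hp1.le, ← ENNReal.ofReal_pow lpNorm_nonneg,
    ← ENNReal.ofReal_pow lpNorm_nonneg, ← ENNReal.ofReal_pow (mul_nonneg hp1.le lpNorm_nonneg),
    ← ENNReal.ofReal_add (by positivity) (by positivity), mul_pow]
  exact ENNReal.ofReal_le_ofReal key

variable {ℱ : Filtration ℕ m0} [SigmaFiniteFiltration μ ℱ] [CompleteSpace E] {d : ℕ → Ω → E}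

lemma eLpNorm_sum_sq_le_of_condExp_ae_eq_zero (hp : 2 ≤ p)
    (hadapted : ∀ i, 1 ≤ i → StronglyMeasurable[ℱ i] (d i))
    (hint : ∀ i, 1 ≤ i → Integrable (d i) μ)
    (hmds : ∀ i, 1 ≤ i → μ[d i | ℱ (i - 1)] =ᵐ[μ] 0) (n : ℕ) :
    eLpNorm (∑ i ∈ Icc 1 n, d i) p μ ^ 2 ≤
      ENNReal.ofReal (2 * (p - 1)) ^ 2 * ∑ i ∈ Icc 1 n, eLpNorm (d i) p μ ^ 2 := by
  induction n with
  | zero => simp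
  | succ n ih =>
    have past_meas : StronglyMeasurable[ℱ n] (∑ i ∈ Icc 1 n, d i) :=
      Finset.stronglyMeasurable_sum _ fun i hi ↦
        (hadapted i (mem_Icc.1 hi).1).mono (ℱ.mono (mem_Icc.1 hi).2)
    have hn : 1 ≤ n + 1 := Nat.le_add_left 1 n
    rw [sum_Icc_succ_top hn, sum_Icc_succ_top hn, mul_add]
    exact (eLpNorm_add_sq_le_of_condExp_ae_eq_zero (ℱ.le n) hp past_meas (hint _ hn)
      (hmds _ hn)).trans (by gcongr)

end MartingaleDifference

section PowerMean

lemma ennreal_sq_rpow_half (a : ℝ≥0∞) (p : ℝ) : (a ^ 2) ^ (p / 2) = a ^ p := by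
  rw [← ENNReal.rpow_natCast_mul, Nat.cast_ofNat, mul_div_cancel₀ _ two_ne_zero]

lemma sum_sq_rpow_half_le_card_rpow_mul_sum_rpow {ι : Type*} (s : Finset ι) (x : ι → ℝ≥0∞) {p : ℝ}
    (hp : 2 ≤ p) :
    (∑ i ∈ s, x i ^ 2) ^ (p / 2) ≤ (#s : ℝ≥0∞) ^ (p / 2 - 1) * ∑ i ∈ s, x i ^ p := by
  refine (ENNReal.rpow_sum_le_const_mul_sum_rpow s (fun i ↦ x i ^ 2) (by linarith)).trans_eq ?_
  simp only [ennreal_sq_rpow_half]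

end PowerMean

theorem stmt10_general {Ω E : Type*} {m0 : MeasurableSpace Ω} [NormedAddCommGroup E]
    [InnerProductSpace ℝ E] [CompleteSpace E] (μ : Measure Ω) (ℱ : Filtration ℕ m0)
    [SigmaFiniteFiltration μ ℱ] (K₀ : ℝ) (hK₀ : 2 ≤ K₀) (n : ℕ) (d : ℕ → Ω → E)
    (hadapted : ∀ i, 1 ≤ i → StronglyMeasurable[ℱ i] (d i))
    (hint : ∀ i, 1 ≤ i → Integrable (d i) μ)
    (hmds : ∀ i, 1 ≤ i → μ[d i | ℱ (i - 1)] =ᵐ[μ] 0) :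
    ∫⁻ ω, ENNReal.ofReal (‖∑ i ∈ Icc 1 n, d i ω‖ ^ K₀) ∂μ
      ≤ ENNReal.ofReal ((2 * (K₀ - 1)) ^ K₀ * (n : ℝ) ^ (K₀ / 2 - 1))
        * ∑ i ∈ Icc 1 n, ∫⁻ ω, ENNReal.ofReal (‖d i ω‖ ^ K₀) ∂μ := by
  lift K₀ to ℝ≥0 using zero_le_two.trans hK₀ with p
  have hp : 2 ≤ p := by exact_mod_cast hK₀
  have hp1 : (0 : ℝ) ≤ 2 * (p - 1) := by linarith
  have hexp : (0 : ℝ) ≤ p / 2 - 1 := by linarith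
  have sum_apply (ω : Ω) : ∑ i ∈ Icc 1 n, d i ω = (∑ i ∈ Icc 1 n, d i) ω :=
    (Finset.sum_apply ω _ d).symm
  simp only [sum_apply, lintegral_ofReal_norm_rpow_eq_eLpNorm_rpow (by positivity : p ≠ 0)]
  calc eLpNorm (∑ i ∈ Icc 1 n, d i) p μ ^ (p : ℝ)
      = (eLpNorm (∑ i ∈ Icc 1 n, d i) p μ ^ 2) ^ (p / 2 : ℝ) := (ennreal_sq_rpow_half _ _).symm
    _ ≤ (ENNReal.ofReal (2 * (p - 1)) ^ 2 *
          ∑ i ∈ Icc 1 n, eLpNorm (d i) p μ ^ 2) ^ (p / 2 : ℝ) := by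
        gcongr
        exact eLpNorm_sum_sq_le_of_condExp_ae_eq_zero hp hadapted hint hmds n
    _ = ENNReal.ofReal (2 * (p - 1)) ^ (p : ℝ) *
          (∑ i ∈ Icc 1 n, eLpNorm (d i) p μ ^ 2) ^ (p / 2 : ℝ) := by
        rw [ENNReal.mul_rpow_of_nonneg _ _ (by positivity), ennreal_sq_rpow_half]
    _ ≤ ENNReal.ofReal (2 * (p - 1)) ^ (p : ℝ) *
          ((n : ℝ≥0∞) ^ (p / 2 - 1 : ℝ) * ∑ i ∈ Icc 1 n, eLpNorm (d i) p μ ^ (p : ℝ)) := by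
        gcongr
        simpa using sum_sq_rpow_half_le_card_rpow_mul_sum_rpow (Icc 1 n)
          (fun i ↦ eLpNorm (d i) p μ) hK₀
    _ = _ := by
        rw [ENNReal.ofReal_rpow_of_nonneg hp1 p.coe_nonneg, ← ENNReal.ofReal_natCast n,
          ENNReal.ofReal_rpow_of_nonneg n.cast_nonneg hexp, ← mul_assoc,
          ← ENNReal.ofReal_mul (by positivity)]

/-- Dharmadhikari–Fabian–Jogdeo moment inequality for martingale differences:
for `K₀ ≥ 2`, `𝔼|∑_{i=1}^n d_i|^{K₀} ≤ L_{K₀} n^{K₀/2-1} ∑ 𝔼|d_i|^{K₀}` with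
`L_{K₀} = (8(K₀-1) max(1, 2^{K₀-3}))^{K₀}`. -/
theorem stmt10 {Ω : Type*} {m0 : MeasurableSpace Ω} (μ : Measure Ω)
    [IsProbabilityMeasure μ]
    (ℱ : Filtration ℕ m0) (K₀ : ℝ) (hK₀ : 2 ≤ K₀) (n : ℕ) (hn : 1 ≤ n)
    (d : ℕ → Ω → ℝ)
    (hadapted : ∀ i, 1 ≤ i → StronglyMeasurable[ℱ i] (d i))
    (hint : ∀ i, Integrable (d i) μ)
    (hmds : ∀ i, 1 ≤ i → μ[d i | ℱ (i - 1)] =ᵐ[μ] 0) :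
    ∫⁻ ω, ENNReal.ofReal (|∑ i ∈ Finset.Icc 1 n, d i ω| ^ K₀) ∂μ
      ≤ ENNReal.ofReal
          ((8 * (K₀ - 1) * max 1 ((2 : ℝ) ^ (K₀ - 3))) ^ K₀
            * (n : ℝ) ^ (K₀ / 2 - 1))
        * ∑ i ∈ Finset.Icc 1 n, ∫⁻ ω, ENNReal.ofReal (|d i ω| ^ K₀) ∂μ := by
  refine (stmt10_general μ ℱ K₀ hK₀ n d hadapted (fun i _ ↦ hint i) hmds).trans ?_
  gcongr ENNReal.ofReal (?_ ^ K₀ * _) * _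
  · linarith
  · nlinarith [le_max_left 1 ((2 : ℝ) ^ (K₀ - 3))]
end
end

section
/- Let $Z_1, Z_2$ be i.i.d. $N_p(0,\Sigma)$ with $\Sigma \in \mathcal{F}_\alpha$ (so $\lambda_{\max}(\Sigma) \le M_0$ and $\max_j\sum_{i:|i-j|>k}|\sigma_{ij}| \le Mk^{-\alpha}$). Define $H_n(Z_1,Z_2) = \frac{2}{n^2}\sum_{1\le i,j\le p}\bar{A}^{(\tau)}_{ij}(z_{1i}z_{1j}-\sigma_{ij})(z_{2i}z_{2j}-\sigma_{ij})$, where $|\bar{A}^{(\tau)}_{ij}| \le 2$ for all $i,j$. Then for any even $K_0 \ge 2$ there is a constant $C$ (depending on $K_0, M, M_0$) such that $\mathbb{E}[H_n(Z_1,Z_2)^{K_0}] \le C\, p^{K_0}/n^{2K_0}$ for all $n \ge 3$ and $1 \le \tau \le p$. -/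
open MeasureTheory ProbabilityTheory Finset

noncomputable section

/-!
A family with a linear moment bound behaves like independent Gaussians under linear combinations,
and products of two such families on independent spaces inherit the bound: integrate one variable
at a time with Fubini, using Minkowski's inequality in `L^m` for the sum of squares left by the
inner integral. For a centered Gaussian vector `x` with independent copy `y`, Jensen's inequality
bounds the moments of a centered quadratic form by those of `Q(x) - Q(y)`, and rotating `(x, y)` by
`π / 4`, which preserves their law, turns this difference into a bilinear form in `x` and `y`. Hence
the centered products `xᵢ xⱼ - σᵢⱼ` again have a linear moment bound, with a constant depending on
the covariance only through its largest eigenvalue, and `H_n` is a diagonal linear combination of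
products of two independent families of this kind.
-/

section Moments

variable {Ω Ω' : Type*} [MeasurableSpace Ω] [MeasurableSpace Ω'] {μ : Measure Ω} {ν : Measure Ω'}

theorem integrable_pow_of_memLp {f : Ω → ℝ} {r : ℕ} (hr : Even r) (hr₀ : r ≠ 0) (hf : MemLp f r μ) :
    Integrable (fun ω => f ω ^ r) μ := by
  simpa only [Real.norm_eq_abs, hr.pow_abs] using hf.integrable_norm_pow hr₀

theorem memLp_mul_of_memLp_two_mul {f g : Ω → ℝ} {r : ℕ} (hf : MemLp f (2 * r : ℕ) μ)
    (hg : MemLp g (2 * r : ℕ) μ) : MemLp (fun ω => f ω * g ω) r μ := by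
  have : ENNReal.HolderTriple (2 * r : ℕ) (2 * r : ℕ) r := ⟨by
    rw [Nat.cast_mul, Nat.cast_ofNat, ENNReal.mul_inv (by simp) (by simp), ← add_mul,
      ENNReal.inv_two_add_inv_two, one_mul]⟩
  exact hg.mul' hf

theorem memLp_mul_prod [SFinite μ] [SFinite ν] {f : Ω → ℝ} {g : Ω' → ℝ} {r : ℕ} (hr : r ≠ 0)
    (hf : MemLp f r μ) (hg : MemLp g r ν) :
    MemLp (fun z : Ω × Ω' => f z.1 * g z.2) r (μ.prod ν) := by
  have hmeas : AEStronglyMeasurable (fun z : Ω × Ω' => f z.1 * g z.2) (μ.prod ν) :=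
    hf.1.comp_fst.mul hg.1.comp_snd
  rw [← integrable_norm_rpow_iff hmeas (mod_cast hr) (ENNReal.natCast_ne_top r)]
  simpa [mul_pow] using (hf.integrable_norm_pow hr).mul_prod (hg.integrable_norm_pow hr)

theorem integral_add_sq {f g : Ω → ℝ} (hf : MemLp f 2 μ) (hg : MemLp g 2 μ) :
    ∫ ω, (f ω + g ω) ^ 2 ∂μ = ∫ ω, f ω ^ 2 ∂μ + ∫ ω, g ω ^ 2 ∂μ + 2 * ∫ ω, f ω * g ω ∂μ := by
  have integrable_sq_add : Integrable (fun ω => f ω ^ 2 + g ω ^ 2) μ :=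
    hf.integrable_sq.add hg.integrable_sq
  have integrable_mul : Integrable (fun ω => 2 * (f ω * g ω)) μ :=
    (hf.integrable_mul hg).const_mul 2
  have expand (ω : Ω) : (f ω + g ω) ^ 2 = f ω ^ 2 + g ω ^ 2 + 2 * (f ω * g ω) := by ring
  simp only [expand]
  rw [integral_add integrable_sq_add integrable_mul,
    integral_add hf.integrable_sq hg.integrable_sq, integral_const_mul]

theorem lpNorm_natCast_pow {f : Ω → ℝ} {r : ℕ} (hr : r ≠ 0) (hf : AEStronglyMeasurable f μ) :
    lpNorm f r μ ^ r = ∫ ω, |f ω| ^ r ∂μ := by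
  rw [lpNorm_eq_integral_norm_rpow_toReal (mod_cast hr) (ENNReal.natCast_ne_top r) hf,
    ENNReal.toReal_natCast, Real.rpow_inv_natCast_pow (by positivity) hr]
  simp

theorem integral_sum_pow_le {ι : Type*} {s : Finset ι} {f : ι → Ω → ℝ} {w : ι → ℝ} {c : ℝ} {r : ℕ}
    (hr : r ≠ 0) (hf : ∀ i ∈ s, MemLp (f i) r μ) (hf₀ : ∀ i ∈ s, ∀ ω, 0 ≤ f i ω)
    (hw : ∀ i ∈ s, 0 ≤ w i) (hc : 0 ≤ c) (hfw : ∀ i ∈ s, ∫ ω, f i ω ^ r ∂μ ≤ c * w i ^ r) :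
    ∫ ω, (∑ i ∈ s, f i ω) ^ r ∂μ ≤ c * (∑ i ∈ s, w i) ^ r := by
  obtain ⟨b, hb, rfl⟩ : ∃ b : ℝ, 0 ≤ b ∧ b ^ r = c :=
    ⟨c ^ (r⁻¹ : ℝ), by positivity, Real.rpow_inv_natCast_pow hc hr⟩
  have norm_le : ∀ i ∈ s, lpNorm (f i) r μ ≤ b * w i := fun i hi => by
    rw [← pow_le_pow_iff_left₀ lpNorm_nonneg (mul_nonneg hb (hw i hi)) hr,
      lpNorm_natCast_pow hr (hf i hi).1, mul_pow]
    simpa only [abs_of_nonneg (hf₀ i hi _)] using hfw i hi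
  have hsum : MemLp (∑ i ∈ s, f i) r μ := memLp_finsetSum' s hf
  calc ∫ ω, (∑ i ∈ s, f i ω) ^ r ∂μ
      = lpNorm (∑ i ∈ s, f i) r μ ^ r := by
        rw [lpNorm_natCast_pow hr hsum.1]
        simp only [Finset.sum_apply, abs_of_nonneg (Finset.sum_nonneg fun i hi => hf₀ i hi _)]
    _ ≤ (∑ i ∈ s, b * w i) ^ r := by
        have one_le : (1 : ENNReal) ≤ r := mod_cast Nat.one_le_iff_ne_zero.2 hr
        exact pow_le_pow_left₀ lpNorm_nonneg
          ((lpNorm_sum_le hf one_le).trans (Finset.sum_le_sum norm_le)) r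
    _ = b ^ r * (∑ i ∈ s, w i) ^ r := by rw [← Finset.mul_sum, mul_pow]

theorem integral_sub_integral_pow_le [IsProbabilityMeasure μ] {f : Ω → ℝ} {r : ℕ} (hr : Even r)
    (hr₀ : r ≠ 0) (hf : MemLp f r μ) :
    ∫ x, (f x - ∫ y, f y ∂μ) ^ r ∂μ ≤ ∫ z, (f z.1 - f z.2) ^ r ∂μ.prod μ := by
  have one_le : (1 : ENNReal) ≤ r := mod_cast Nat.one_le_iff_ne_zero.2 hr₀
  have hint : Integrable (fun z : Ω × Ω => (f z.1 - f z.2) ^ r) (μ.prod μ) :=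
    integrable_pow_of_memLp hr hr₀ ((hf.comp_fst μ).sub (hf.comp_snd μ))
  rw [integral_prod _ hint]
  refine integral_mono (integrable_pow_of_memLp hr hr₀ (hf.sub (memLp_const _)))
    hint.integral_prod_left fun x => ?_
  have hx : MemLp (fun y => f x - f y) r μ := (memLp_const _).sub hf
  have mean_sub : f x - ∫ y, f y ∂μ = ∫ y, (f x - f y) ∂μ := by
    rw [integral_sub (integrable_const _) (hf.integrable one_le)]
    simp
  beta_reduce
  rw [mean_sub]
  exact hr.convexOn_pow.map_integral_le (by fun_prop) isClosed_univ (by simp)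
    (hx.integrable one_le) (integrable_pow_of_memLp hr hr₀ hx)

end Moments

/-- The linear map `a ↦ ∑ aᵢ Xᵢ` from `ℓ²` to `L^{2m}(μ)` has norm at most `c ^ (1 / (2 * m))`. This
is the property of Gaussian vectors that passes to their chaoses. -/
structure HasLinearMomentBound {ι Ω : Type*} [Fintype ι] [MeasurableSpace Ω] (X : ι → Ω → ℝ)
    (μ : Measure Ω) (m : ℕ) (c : ℝ) : Prop where
  nonneg : 0 ≤ c
  memLp : ∀ i, MemLp (X i) (2 * m : ℕ) μ
  integral_pow_le : ∀ a : ι → ℝ, ∫ ω, (∑ i, a i * X i ω) ^ (2 * m) ∂μ ≤ c * (∑ i, a i ^ 2) ^ m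

namespace HasLinearMomentBound

variable {ι κ Ω Ω' : Type*} [Fintype ι] [Fintype κ] [MeasurableSpace Ω] [MeasurableSpace Ω']
  {μ : Measure Ω} {ν : Measure Ω'} {X : ι → Ω → ℝ} {Y : κ → Ω' → ℝ} {m : ℕ} {c d : ℝ}

theorem memLp_sum (hX : HasLinearMomentBound X μ m c) (a : ι → ℝ) :
    MemLp (fun ω => ∑ i, a i * X i ω) (2 * m : ℕ) μ :=
  memLp_finsetSum _ fun i _ => (hX.memLp i).const_mul (a i)

theorem comp_injective (hX : HasLinearMomentBound X μ m c) {e : κ → ι} (he : e.Injective) :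
    HasLinearMomentBound (X ∘ e) μ m c where
  nonneg := hX.nonneg
  memLp i := hX.memLp (e i)
  integral_pow_le a := by
    have sum_extend (F : ℝ → ι → ℝ) (hF : ∀ i, F 0 i = 0) :
        ∑ i, F (Function.extend e a 0 i) i = ∑ j, F (a j) (e j) :=
      (Fintype.sum_of_injective e he _ _
        (fun i hi => by rw [Function.extend_apply' _ _ _ hi, Pi.zero_apply, hF])
        fun j => by rw [he.extend_apply]).symm
    have bound := hX.integral_pow_le (Function.extend e a 0)
    simp only [sum_extend (fun t _ => t ^ 2) (by simp)] at bound
    have sum_eq (ω : Ω) : ∑ i, Function.extend e a 0 i * X i ω = ∑ j, a j * X (e j) ω :=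
      sum_extend (fun t i => t * X i ω) (by simp)
    simpa only [sum_eq, Function.comp_apply] using bound

theorem memLp_sum_sq (hX : HasLinearMomentBound X μ m c) (a : ι → ℝ) :
    MemLp (fun ω => (∑ i, a i * X i ω) ^ 2) m μ := by
  simpa only [sq] using memLp_mul_of_memLp_two_mul (hX.memLp_sum a) (hX.memLp_sum a)

theorem integrable_sum_sq_pow (hX : HasLinearMomentBound X μ m c) (hm : m ≠ 0) (D : κ → ι → ℝ) :
    Integrable (fun ω => (∑ j, (∑ i, D j i * X i ω) ^ 2) ^ m) μ := by
  have h := (memLp_finsetSum univ fun j _ => hX.memLp_sum_sq (D j)).integrable_norm_pow hm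
  simpa only [Real.norm_of_nonneg (Finset.sum_nonneg fun _ _ => sq_nonneg _)] using h

theorem integral_sum_sq_pow_le (hX : HasLinearMomentBound X μ m c) (hm : m ≠ 0) (D : κ → ι → ℝ) :
    ∫ ω, (∑ j, (∑ i, D j i * X i ω) ^ 2) ^ m ∂μ ≤ c * (∑ j, ∑ i, D j i ^ 2) ^ m :=
  integral_sum_pow_le hm (fun j _ => hX.memLp_sum_sq (D j)) (fun _ _ _ => sq_nonneg _)
    (fun _ _ => by positivity) hX.nonneg fun j _ => by
      simpa only [← pow_mul] using hX.integral_pow_le (D j)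

theorem tensor [SFinite μ] [SFinite ν] (hX : HasLinearMomentBound X μ m c)
    (hY : HasLinearMomentBound Y ν m d) (hm : m ≠ 0) :
    HasLinearMomentBound (fun (k : ι × κ) (z : Ω × Ω') => X k.1 z.1 * Y k.2 z.2) (μ.prod ν) m
      (c * d) where
  nonneg := mul_nonneg hX.nonneg hY.nonneg
  memLp k := memLp_mul_prod (by omega) (hX.memLp k.1) (hY.memLp k.2)
  integral_pow_le a := by
    have inner (x : Ω) : ∫ y, (∑ k : ι × κ, a k * (X k.1 x * Y k.2 y)) ^ (2 * m) ∂ν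
        ≤ d * (∑ j, (∑ i, a (i, j) * X i x) ^ 2) ^ m := by
      have sum_eq (y : Ω') : ∑ k : ι × κ, a k * (X k.1 x * Y k.2 y)
          = ∑ j, (∑ i, a (i, j) * X i x) * Y j y := by
        simp only [Fintype.sum_prod_type_right, Finset.sum_mul, mul_assoc]
      simpa only [sum_eq] using hY.integral_pow_le fun j => ∑ i, a (i, j) * X i x
    have hint : Integrable (fun z : Ω × Ω' => (∑ k, a k * (X k.1 z.1 * Y k.2 z.2)) ^ (2 * m))
        (μ.prod ν) :=
      integrable_pow_of_memLp (even_two_mul m) (by omega) (memLp_finsetSum _ fun k _ =>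
        (memLp_mul_prod (by omega) (hX.memLp k.1) (hY.memLp k.2)).const_mul (a k))
    calc ∫ z, (∑ k, a k * (X k.1 z.1 * Y k.2 z.2)) ^ (2 * m) ∂μ.prod ν
        = ∫ x, ∫ y, (∑ k, a k * (X k.1 x * Y k.2 y)) ^ (2 * m) ∂ν ∂μ := integral_prod _ hint
      _ ≤ ∫ x, d * (∑ j, (∑ i, a (i, j) * X i x) ^ 2) ^ m ∂μ :=
        integral_mono hint.integral_prod_left
          ((hX.integrable_sum_sq_pow hm fun j i => a (i, j)).const_mul d) inner
      _ ≤ d * (c * (∑ j, ∑ i, a (i, j) ^ 2) ^ m) := by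
        rw [integral_const_mul]
        exact mul_le_mul_of_nonneg_left (hX.integral_sum_sq_pow_le hm fun j i => a (i, j)) hY.nonneg
      _ = c * d * (∑ k, a k ^ 2) ^ m := by
        rw [Fintype.sum_prod_type_right]
        ring

end HasLinearMomentBound

section Quadratic

variable {ι : Type*} {μ : Measure (ι → ℝ)} [IsGaussian μ]

theorem memLp_coord_of_isGaussian [Finite ι] (i : ι) (r : ℕ) :
    MemLp (fun x : ι → ℝ => x i) r μ := by
  have := Fintype.ofFinite ι
  exact IsGaussian.memLp_dual μ (ContinuousLinearMap.proj i) r (ENNReal.natCast_ne_top r)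

theorem memLp_mul_coord_of_isGaussian [Finite ι] (i j : ι) (r : ℕ) :
    MemLp (fun x : ι → ℝ => x i * x j) r μ :=
  memLp_mul_of_memLp_two_mul (memLp_coord_of_isGaussian i _) (memLp_coord_of_isGaussian j _)

variable [Fintype ι]

theorem sum_mul_swap_decouple (a : ι × ι → ℝ) (x y : ι → ℝ) :
    ∑ k, (a k + a k.swap) * (x k.1 * y k.2) = ∑ k, a k * (x k.1 * y k.2 + x k.2 * y k.1) := by
  have swap : ∑ k : ι × ι, a k.swap * (x k.1 * y k.2) = ∑ k, a k * (x k.2 * y k.1) :=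
    (Equiv.prodComm ι ι).sum_comp fun k => a k * (x k.2 * y k.1)
  simp only [add_mul, mul_add, Finset.sum_add_distrib, swap]

/-- Decoupling: rotating `(x, y)` by `π / 4` turns `xᵢ xⱼ - yᵢ yⱼ` into `xᵢ yⱼ + xⱼ yᵢ`. -/
theorem integral_quadratic_sub_pow_eq (hμ : μ[id] = 0) (a : ι × ι → ℝ) (r : ℕ) :
    ∫ z, (∑ k, a k * (z.1 k.1 * z.1 k.2) - ∑ k, a k * (z.2 k.1 * z.2 k.2)) ^ r ∂μ.prod μ
      = ∫ z, (∑ k, (a k + a k.swap) * (z.1 k.1 * z.2 k.2)) ^ r ∂μ.prod μ := by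
  conv_lhs => rw [← IsGaussian.map_rotation_eq_self hμ (Real.pi / 4)]
  rw [integral_map (by fun_prop) (Measurable.aestronglyMeasurable (by fun_prop))]
  refine integral_congr_ae (.of_forall fun z => congrArg (· ^ r) ?_)
  have sq_sqrt_two : √(2 : ℝ) ^ 2 = 2 := Real.sq_sqrt zero_le_two
  rw [sum_mul_swap_decouple, ← Finset.sum_sub_distrib]
  refine Finset.sum_congr rfl fun k _ => ?_
  simp only [ContinuousLinearMap.rotation_apply, Real.cos_pi_div_four, Real.sin_pi_div_four,
    Pi.add_apply, Pi.smul_apply, smul_eq_mul]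
  linear_combination (a k * (z.1 k.1 * z.2 k.2 + z.1 k.2 * z.2 k.1) / 2) * sq_sqrt_two

theorem sum_add_swap_sq_le (a : ι × ι → ℝ) : ∑ k, (a k + a k.swap) ^ 2 ≤ 4 * ∑ k, a k ^ 2 :=
  calc ∑ k, (a k + a k.swap) ^ 2
      ≤ ∑ k, 2 * (a k ^ 2 + a k.swap ^ 2) := Finset.sum_le_sum fun _ _ => add_sq_le
    _ = 4 * ∑ k, a k ^ 2 := by
      have swap : ∑ k : ι × ι, a k.swap ^ 2 = ∑ k, a k ^ 2 :=
        (Equiv.prodComm ι ι).sum_comp fun k => a k ^ 2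
      rw [← Finset.mul_sum, Finset.sum_add_distrib, swap]
      ring

theorem HasLinearMomentBound.quadratic {m : ℕ} {c : ℝ} (hμ : μ[id] = 0) (hm : m ≠ 0)
    (h : HasLinearMomentBound (fun i x => x i) μ m c) :
    HasLinearMomentBound (fun (k : ι × ι) x => x k.1 * x k.2 - ∫ y, y k.1 * y k.2 ∂μ) μ m
      (4 ^ m * c ^ 2) where
  nonneg := by positivity
  memLp k := (memLp_mul_coord_of_isGaussian k.1 k.2 _).sub (memLp_const _)
  integral_pow_le a := by
    have hm₂ : 2 * m ≠ 0 := by omega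
    have memLp (r : ℕ) (k : ι × ι) : MemLp (fun x : ι → ℝ => a k * (x k.1 * x k.2)) r μ :=
      (memLp_mul_coord_of_isGaussian k.1 k.2 r).const_mul (a k)
    have center (x : ι → ℝ) : ∑ k, a k * (x k.1 * x k.2 - ∫ y, y k.1 * y k.2 ∂μ)
        = ∑ k, a k * (x k.1 * x k.2) - ∫ y, ∑ k, a k * (y k.1 * y k.2) ∂μ := by
      rw [integral_finsetSum _ fun k _ => memLp_one_iff_integrable.1 (mod_cast memLp 1 k)]
      simp only [integral_const_mul, mul_sub, Finset.sum_sub_distrib]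
    calc ∫ x, (∑ k, a k * (x k.1 * x k.2 - ∫ y, y k.1 * y k.2 ∂μ)) ^ (2 * m) ∂μ
        ≤ ∫ z, (∑ k, a k * (z.1 k.1 * z.1 k.2) - ∑ k, a k * (z.2 k.1 * z.2 k.2)) ^ (2 * m)
            ∂μ.prod μ := by
          simp only [center]
          exact integral_sub_integral_pow_le (even_two_mul m) hm₂
            (memLp_finsetSum univ fun k _ => memLp _ k)
      _ = ∫ z, (∑ k, (a k + a k.swap) * (z.1 k.1 * z.2 k.2)) ^ (2 * m) ∂μ.prod μ :=
          integral_quadratic_sub_pow_eq hμ a _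
      _ ≤ c * c * (∑ k, (a k + a k.swap) ^ 2) ^ m := (h.tensor h hm).integral_pow_le _
      _ ≤ c * c * (4 * ∑ k, a k ^ 2) ^ m := by
          gcongr
          · exact mul_self_nonneg c
          · exact sum_add_swap_sq_le a
      _ = 4 ^ m * c ^ 2 * (∑ k, a k ^ 2) ^ m := by ring

end Quadratic

/-- The `2m`-th moment `(2m - 1)!!` of the standard normal distribution, the constant in the moment
bounds for Gaussian vectors. -/
def gaussianEvenMoment (m : ℕ) : ℝ := ∫ x, x ^ (2 * m) ∂gaussianReal 0 1

theorem gaussianEvenMoment_nonneg (m : ℕ) : 0 ≤ gaussianEvenMoment m :=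
  integral_nonneg fun x => (even_two_mul m).pow_nonneg x

theorem gaussianEvenMoment_one : gaussianEvenMoment 1 = 1 := by
  have h := variance_id_gaussianReal (μ := 0) (v := 1)
  rw [variance_of_integral_eq_zero (by fun_prop) (by simp)] at h
  simpa [gaussianEvenMoment] using h

theorem integral_pow_gaussianReal (v : NNReal) (m : ℕ) :
    ∫ x, x ^ (2 * m) ∂gaussianReal 0 v = gaussianEvenMoment m * (v : ℝ) ^ m := by
  have map_eq : (gaussianReal 0 1).map (√(v : ℝ) * ·) = gaussianReal 0 v := by
    rw [gaussianReal_map_const_mul]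
    congr 1
    · simp
    · ext; simp
  rw [← map_eq, integral_map (by fun_prop) (by fun_prop)]
  simp only [mul_pow]
  rw [integral_const_mul, pow_mul, Real.sq_sqrt v.coe_nonneg, gaussianEvenMoment, mul_comm]

/-- `S` is a covariance matrix (symmetric and positive semidefinite) with `λ_max(S) ≤ M₀`, the
eigenvalue bound being expressed through the quadratic form of `S`. -/
structure IsCovarianceLE {p : ℕ} (S : Matrix (Fin p) (Fin p) ℝ) (M₀ : ℝ) : Prop where
  isSymm : S.IsSymm
  nonneg : ∀ v : Fin p → ℝ, 0 ≤ ∑ i, ∑ j, v i * S i j * v j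
  le : ∀ v : Fin p → ℝ, ∑ i, ∑ j, v i * S i j * v j ≤ M₀ * ∑ i, v i ^ 2

namespace IsGaussianVec

variable {Ω : Type*} [MeasureSpace Ω] {p : ℕ} {Z : Ω → Fin p → ℝ}
  {S : Matrix (Fin p) (Fin p) ℝ} {M₀ : ℝ}

theorem aemeasurable (hZ : IsGaussianVec Z S) : AEMeasurable Z ℙ := by
  refine aemeasurable_pi_iff.2 fun i => aemeasurable_of_map_neZero ?_
  have h := hZ (Pi.single i 1)
  simp only [Pi.single_apply, ite_mul, one_mul, zero_mul, Finset.sum_ite_eq', Finset.mem_univ,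
    if_true] at h
  rw [h]
  infer_instance

theorem map_linear (hZ : IsGaussianVec Z S) (a : Fin p → ℝ) :
    (Measure.map Z ℙ).map (fun x => ∑ i, a i * x i)
      = gaussianReal 0 (∑ i, ∑ j, a i * S i j * a j).toNNReal := by
  rw [AEMeasurable.map_map_of_aemeasurable (Measurable.aemeasurable (by fun_prop)) hZ.aemeasurable]
  exact hZ a

theorem exists_map_dual_eq_gaussianReal (hZ : IsGaussianVec Z S) (L : StrongDual ℝ (Fin p → ℝ)) :
    ∃ v, (Measure.map Z ℙ).map L = gaussianReal 0 v := by
  have L_eq : (L : (Fin p → ℝ) → ℝ) = fun x => ∑ i, L (Pi.single i 1) * x i := by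
    ext x
    conv_lhs => rw [pi_eq_sum_univ' x]
    simp only [map_sum, map_smul, smul_eq_mul, mul_comm]
  exact ⟨_, by rw [L_eq]; exact hZ.map_linear _⟩

theorem isGaussian_map (hZ : IsGaussianVec Z S) : IsGaussian (Measure.map Z ℙ) :=
  isGaussian_of_map_eq_gaussianReal fun L => ⟨0, hZ.exists_map_dual_eq_gaussianReal L⟩

theorem integral_id_map (hZ : IsGaussianVec Z S) : (Measure.map Z ℙ)[id] = 0 := by
  have := hZ.isGaussian_map
  refine (SeparatingDual.eq_zero_iff_forall_dual_eq_zero (R := ℝ) _).2 fun L => ?_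
  obtain ⟨v, hv⟩ := hZ.exists_map_dual_eq_gaussianReal L
  calc L (∫ x, id x ∂Measure.map Z ℙ) = ∫ x, L x ∂Measure.map Z ℙ :=
        (L.integral_comp_comm IsGaussian.integrable_id).symm
    _ = ∫ t, t ∂(Measure.map Z ℙ).map L :=
        (integral_map (φ := L) (f := id) (by fun_prop) (by fun_prop)).symm
    _ = 0 := by rw [hv, integral_id_gaussianReal]

theorem integral_linear_pow (hZ : IsGaussianVec Z S) {a : Fin p → ℝ}
    (ha : 0 ≤ ∑ i, ∑ j, a i * S i j * a j) (m : ℕ) :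
    ∫ x, (∑ i, a i * x i) ^ (2 * m) ∂Measure.map Z ℙ
      = gaussianEvenMoment m * (∑ i, ∑ j, a i * S i j * a j) ^ m := by
  have h := integral_pow_gaussianReal (∑ i, ∑ j, a i * S i j * a j).toNNReal m
  rwa [← hZ.map_linear a, integral_map (Measurable.aemeasurable (by fun_prop)) (by fun_prop),
    Real.coe_toNNReal _ ha] at h

theorem integral_mul (hZ : IsGaussianVec Z S) (hsymm : S.IsSymm)
    (hnonneg : ∀ v : Fin p → ℝ, 0 ≤ ∑ i, ∑ j, v i * S i j * v j) (i j : Fin p) :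
    ∫ x, x i * x j ∂Measure.map Z ℙ = S i j := by
  have := hZ.isGaussian_map
  have integral_sq (a : Fin p → ℝ) :
      ∫ x, (∑ i, a i * x i) ^ 2 ∂Measure.map Z ℙ = ∑ i, ∑ j, a i * S i j * a j := by
    simpa [gaussianEvenMoment_one] using hZ.integral_linear_pow (hnonneg a) 1
  have memLp (i : Fin p) : MemLp (fun x => x i) 2 (Measure.map Z ℙ) :=
    memLp_coord_of_isGaussian i (r := 2)
  have h_add := integral_sq (Pi.single i 1 + Pi.single j 1)
  have h_i := integral_sq (Pi.single i 1)
  have h_j := integral_sq (Pi.single j 1)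
  simp only [one_mul, mul_one, Pi.add_apply, add_mul, mul_add, Finset.sum_add_distrib,
    Pi.single_apply, ite_mul, mul_ite, zero_mul, mul_zero, Finset.sum_ite_eq',
    Finset.mem_univ, if_true] at h_add h_i h_j
  linarith [hsymm.apply i j, integral_add_sq (memLp i) (memLp j)]

theorem hasLinearMomentBound (hZ : IsGaussianVec Z S) (hM₀ : 0 ≤ M₀) (hS : IsCovarianceLE S M₀)
    (m : ℕ) : HasLinearMomentBound (fun i x => x i) (Measure.map Z ℙ) m
      (gaussianEvenMoment m * M₀ ^ m) where
  nonneg := mul_nonneg (gaussianEvenMoment_nonneg m) (pow_nonneg hM₀ m)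
  memLp i :=
    have := hZ.isGaussian_map
    memLp_coord_of_isGaussian i (2 * m)
  integral_pow_le a := by
    rw [hZ.integral_linear_pow (hS.nonneg a), mul_assoc, ← mul_pow]
    exact mul_le_mul_of_nonneg_left (pow_le_pow_left₀ (hS.nonneg a) (hS.le a) m)
      (gaussianEvenMoment_nonneg m)

end IsGaussianVec

theorem sqrt_sum_sq_le_mul_card {ι : Type*} [Fintype ι] {a : ℝ} (ha : 0 ≤ a) {A : Matrix ι ι ℝ}
    (hA : ∀ i j, |A i j| ≤ a) : √(∑ i, ∑ j, A i j ^ 2) ≤ a * Fintype.card ι := by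
  refine Real.sqrt_le_iff.2 ⟨by positivity, ?_⟩
  calc ∑ i, ∑ j, A i j ^ 2 ≤ ∑ _i : ι, ∑ _j : ι, a ^ 2 :=
        Finset.sum_le_sum fun i _ => Finset.sum_le_sum fun j _ =>
          sq_le_sq.2 ((hA i j).trans (le_abs_self a))
    _ = (a * Fintype.card ι) ^ 2 := by
        simp only [Finset.sum_const, Finset.card_univ, nsmul_eq_mul]
        ring

theorem integral_chaos_pow_le {Ω : Type*} [MeasureSpace Ω] {p m : ℕ} {M₀ : ℝ} (hM₀ : 0 ≤ M₀)
    (hm : m ≠ 0) {S T : Matrix (Fin p) (Fin p) ℝ} (hS : IsCovarianceLE S M₀)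
    (hT : IsCovarianceLE T M₀) (A : Matrix (Fin p) (Fin p) ℝ) {Z₁ Z₂ : Ω → Fin p → ℝ}
    (hZ₁ : IsGaussianVec Z₁ S) (hZ₂ : IsGaussianVec Z₂ T) (hind : IndepFun Z₁ Z₂ ℙ) :
    ∫ ω, (∑ i, ∑ j, A i j * (Z₁ ω i * Z₁ ω j - S i j) * (Z₂ ω i * Z₂ ω j - T i j)) ^ (2 * m) ∂ℙ
      ≤ (4 ^ m * (gaussianEvenMoment m * M₀ ^ m) ^ 2) ^ 2 * (∑ i, ∑ j, A i j ^ 2) ^ m := by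
  have := hZ₁.isGaussian_map
  have := hZ₂.isGaussian_map
  have bound := (((hZ₁.hasLinearMomentBound hM₀ hS m).quadratic hZ₁.integral_id_map hm).tensor
    ((hZ₂.hasLinearMomentBound hM₀ hT m).quadratic hZ₂.integral_id_map hm) hm).comp_injective
    (fun _ _ h => congrArg Prod.fst h : (fun k : Fin p × Fin p => (k, k)).Injective)
  have h := bound.integral_pow_le fun k => A k.1 k.2
  have law : Measure.map (fun ω => (Z₁ ω, Z₂ ω)) ℙ = (Measure.map Z₁ ℙ).prod (Measure.map Z₂ ℙ) :=
    (indepFun_iff_map_prod_eq_prod_map_map' hZ₁.aemeasurable hZ₂.aemeasurable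
      inferInstance inferInstance).1 hind
  rw [← law, integral_map (hZ₁.aemeasurable.prodMk hZ₂.aemeasurable)
    (Measurable.aestronglyMeasurable (by fun_prop))] at h
  simpa only [hZ₁.integral_mul hS.isSymm hS.nonneg,
    hZ₂.integral_mul hT.isSymm hT.nonneg, Function.comp_apply,
    Fintype.sum_prod_type, ← mul_assoc, ← sq] using h

theorem stmt11_general {M₀ : ℝ} (hM₀ : 0 ≤ M₀) {K₀ : ℕ} (hK₀ : K₀ ≠ 0) (hK : Even K₀) :
    ∃ C : ℝ, 0 < C ∧ ∀ {p n : ℕ}, 0 < n → ∀ {S T : Matrix (Fin p) (Fin p) ℝ},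
      IsCovarianceLE S M₀ → IsCovarianceLE T M₀ → ∀ (A : Matrix (Fin p) (Fin p) ℝ)
      {Ω : Type*} [MeasureSpace Ω] {Z₁ Z₂ : Ω → Fin p → ℝ},
      IsGaussianVec Z₁ S → IsGaussianVec Z₂ T → IndepFun Z₁ Z₂ ℙ →
      ∫ ω, ((2 / (n : ℝ) ^ 2) * ∑ i : Fin p, ∑ j : Fin p,
          A i j * (Z₁ ω i * Z₁ ω j - S i j) * (Z₂ ω i * Z₂ ω j - T i j)) ^ K₀ ∂ℙ
        ≤ C * √(∑ i, ∑ j, A i j ^ 2) ^ K₀ / (n : ℝ) ^ (2 * K₀) := by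
  obtain ⟨m, rfl⟩ := even_iff_exists_two_mul.1 hK
  set c := (4 ^ m * (gaussianEvenMoment m * M₀ ^ m) ^ 2) ^ 2
  refine ⟨2 ^ (2 * m) * c + 1, by positivity, ?_⟩
  intro p n _ S T hS hT A Ω _ Z₁ Z₂ hZ₁ hZ₂ hind
  simp only [mul_pow (2 / (n : ℝ) ^ 2), integral_const_mul]
  calc (2 / (n : ℝ) ^ 2) ^ (2 * m) * _
      ≤ (2 / (n : ℝ) ^ 2) ^ (2 * m) * (c * (∑ i, ∑ j, A i j ^ 2) ^ m) := by
        gcongr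
        exact integral_chaos_pow_le hM₀ (by omega) hS hT A hZ₁ hZ₂ hind
    _ = 2 ^ (2 * m) * c * √(∑ i, ∑ j, A i j ^ 2) ^ (2 * m) / (n : ℝ) ^ (2 * (2 * m)) := by
        rw [div_pow, ← pow_mul, pow_mul √_, Real.sq_sqrt (by positivity)]
        ring
    _ ≤ _ := by
        gcongr
        exact le_add_of_nonneg_right zero_le_one

/-- For `Z₁, Z₂` i.i.d. `N_p(0,Σ)` with `Σ ∈ 𝓕_α`, and
`H_n(Z₁,Z₂) = (2/n²) ∑_{i,j} Ā_ij (z_{1i}z_{1j}−σ_ij)(z_{2i}z_{2j}−σ_ij)` with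
`|Ā_ij| ≤ 2`, for any even `K₀ ≥ 2` there is `C` with
`𝔼 H_n(Z₁,Z₂)^{K₀} ≤ C p^{K₀}/n^{2K₀}` for `n ≥ 3`, `1 ≤ τ ≤ p`. -/
theorem stmt11 (M M₀ α : ℝ) (hM : 0 < M) (hM₀ : 0 < M₀) (hα : 0 < α)
    (K₀ : ℕ) (hK : 2 ≤ K₀) (hKeven : Even K₀) :
    ∃ C : ℝ, 0 < C ∧
      ∀ (p n τ : ℕ), 3 ≤ n → 1 ≤ τ → τ ≤ p →
      ∀ (S : Matrix (Fin p) (Fin p) ℝ), S.IsSymm →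
        (∀ v : Fin p → ℝ, 0 ≤ ∑ i, ∑ j, v i * S i j * v j) →
        (∀ v : Fin p → ℝ, ∑ i, ∑ j, v i * S i j * v j ≤ M₀ * ∑ i, v i ^ 2) →
        (∀ k : ℕ, 1 ≤ k → ∀ j : Fin p,
            ∑ i ∈ Finset.univ.filter
                (fun i : Fin p => k < ((i : ℤ) - (j : ℤ)).natAbs),
              |S i j| ≤ M * (k : ℝ) ^ (-α)) →
      ∀ (A : Matrix (Fin p) (Fin p) ℝ), (∀ i j, |A i j| ≤ 2) →
      ∀ (Ω : Type) (_ : MeasureSpace Ω)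
        (_ : IsProbabilityMeasure (ℙ : Measure Ω))
        (Z₁ Z₂ : Ω → Fin p → ℝ), Measurable Z₁ → Measurable Z₂ →
        IsGaussianVec Z₁ S → IsGaussianVec Z₂ S → IndepFun Z₁ Z₂ ℙ →
      (∫ ω, ((2 / (n : ℝ) ^ 2) * ∑ i : Fin p, ∑ j : Fin p,
            A i j * (Z₁ ω i * Z₁ ω j - S i j) * (Z₂ ω i * Z₂ ω j - S i j)) ^ K₀ ∂ℙ)
        ≤ C * (p : ℝ) ^ K₀ / (n : ℝ) ^ (2 * K₀) := by
  obtain ⟨C, hC, bound⟩ := stmt11_general hM₀.le (by omega) hKeven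
  refine ⟨C * 2 ^ K₀, by positivity, ?_⟩
  intro p n τ hn _ _ S hsymm hnonneg hle _ A hA Ω _ _ Z₁ Z₂ _ _ hZ₁ hZ₂ hind
  have hS : IsCovarianceLE S M₀ := ⟨hsymm, hnonneg, hle⟩
  grw [bound (by omega) hS hS A hZ₁ hZ₂ hind, sqrt_sum_sq_le_mul_card zero_le_two hA,
    Fintype.card_fin, mul_pow, mul_assoc]
end
end

section
/- Let $Z \sim N_p(0, \Sigma)$ with $\Sigma \in \mathcal{F}_\alpha$, and let coefficients $\bar{A}^{(\tau)}_{ij}$ be bounded by 2 in absolute value. Define $Y = \frac{2(n-2)}{n^2}\sum_{1\le i,j\le p} \bar{A}^{(\tau)}_{ij}\sigma_{ij}(z_i z_j - \sigma_{ij})$. Then for any even $K_0 \ge 2$ there exists $C$ such that $\mathbb{E}[Y^{K_0}] \le C\, p^{K_0/2}/n^{K_0}$ for all $n \ge 3$ and $1 \le \tau \le p$. -/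
open MeasureTheory ProbabilityTheory Finset

noncomputable section

/-!
`Z` has the law of `R g`, with `g` standard Gaussian and `R = √Σ`, so for `B = Ā ⊙ Σ` the sum is
`⟨g, G g⟩ - tr G` with `G = R B R`. Replacing `G` by its symmetric part and rotating `g` to an
eigenbasis turns this into `∑ λₖ (gₖ² - 1)`. For `t² ∑ λₖ² ≤ 1 / 16` its moment generating function
at `t` is at most `exp (4 t² ∑ λₖ²)`; taking `t² ∑ λₖ² = 1 / 16` and
`x ^ K ≤ K! (exp x + exp (-x))` bounds the `K`-th moment by a constant times `(∑ λₖ²) ^ (K / 2)`.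
Finally `∑ λₖ² ≤ ‖G‖² ≤ M₀² ‖B‖² ≤ M₀² a² ‖Σ‖² ≤ a² M₀⁴ p` in Frobenius norm, by `Σ ≤ M₀ I`
and `|Āᵢⱼ| ≤ a`.
-/

section ExponentialMoments

variable {Ω : Type*} {mΩ : MeasurableSpace Ω} {μ : Measure Ω}

lemma pow_le_factorial_mul_exp_add_exp_neg {K : ℕ} (hK : Even K) (x : ℝ) :
    x ^ K ≤ K.factorial * (Real.exp x + Real.exp (-x)) := by
  have h := Real.pow_div_factorial_le_exp |x| (abs_nonneg x) K
  rw [hK.pow_abs, div_le_iff₀' (by positivity)] at h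
  refine h.trans (mul_le_mul_of_nonneg_left ?_ (by positivity))
  rcases abs_choice x with hx | hx <;> rw [hx] <;>
    linarith [Real.exp_pos x, Real.exp_pos (-x)]

lemma pow_mul_integral_pow_le_factorial_mul_mgf {X : Ω → ℝ} {t : ℝ} {K : ℕ} (hK : Even K)
    (hpos : Integrable (fun ω => Real.exp (t * X ω)) μ)
    (hneg : Integrable (fun ω => Real.exp (-t * X ω)) μ) :
    t ^ K * ∫ ω, X ω ^ K ∂μ ≤ K.factorial * (mgf X μ t + mgf X μ (-t)) := by
  rw [← integral_const_mul, mgf, mgf, ← integral_add hpos hneg, ← integral_const_mul]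
  simp_rw [← mul_pow, neg_mul] at hneg ⊢
  exact integral_mono_of_nonneg (ae_of_all _ fun _ => hK.pow_nonneg _)
    ((hpos.add hneg).const_mul _)
    (ae_of_all _ fun ω => pow_le_factorial_mul_exp_add_exp_neg hK (t * X ω))

end ExponentialMoments

section GaussianChaos

lemma mgf_sq_sub_one_gaussianReal {s : ℝ} (hs : s < 1 / 2) :
    mgf (fun x => x ^ 2 - 1) (gaussianReal 0 1) s = Real.exp (-s) / √(1 - 2 * s) := by
  have density_mul_exp : ∀ x : ℝ, gaussianPDFReal 0 1 x • Real.exp (s * (x ^ 2 - 1))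
      = (√(2 * Real.pi))⁻¹ * Real.exp (-s) * Real.exp (-(1 / 2 - s) * x ^ 2) := by
    intro x
    simp only [gaussianPDFReal, NNReal.coe_one, mul_one, sub_zero, smul_eq_mul, mul_assoc,
      ← Real.exp_add]
    ring_nf
  have hs' : 0 < 1 - 2 * s := by linarith
  simp only [mgf, integral_gaussianReal_eq_integral_smul one_ne_zero, density_mul_exp,
    integral_const_mul, integral_gaussian]
  rw [show Real.pi / (1 / 2 - s) = 2 * Real.pi / (1 - 2 * s) by field_simp,
    Real.sqrt_div (by positivity)]
  field_simp

lemma exp_neg_div_sqrt_one_sub_two_mul_le {s : ℝ} (hs : |s| ≤ 1 / 4) :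
    Real.exp (-s) / √(1 - 2 * s) ≤ Real.exp (4 * s ^ 2) := by
  have hs2 : |2 * s| ≤ 1 / 2 := by rw [abs_mul, abs_two]; linarith
  have hpos : 0 < 1 - 2 * s := by linarith [(abs_le.mp hs).2]
  have hlog : -(2 * s + Real.log (1 - 2 * s)) ≤ 8 * s ^ 2 := by
    have h := Real.abs_log_sub_add_sum_range_le (hs2.trans_lt (by norm_num)) 1
    simp only [range_one, sum_singleton, CharP.cast_eq_zero, zero_add, pow_one, div_one] at h
    calc -(2 * s + Real.log (1 - 2 * s)) ≤ |2 * s| ^ 2 / (1 - |2 * s|) := (neg_le_abs _).trans h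
      _ ≤ |2 * s| ^ 2 / (1 / 2) := by gcongr; linarith
      _ = 8 * s ^ 2 := by rw [sq_abs]; ring
  rw [Real.sqrt_eq_rpow, Real.rpow_def_of_pos hpos, ← Real.exp_sub, Real.exp_le_exp]
  linarith

variable {ι : Type*} [Fintype ι]

lemma mgf_sum_mul_sq_sub_one_pi (l : ι → ℝ) (t : ℝ) :
    mgf (fun g : ι → ℝ => ∑ k, l k * (g k ^ 2 - 1)) (Measure.pi fun _ => gaussianReal 0 1) t
      = ∏ k, mgf (fun x => x ^ 2 - 1) (gaussianReal 0 1) (t * l k) := by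
  simp only [mgf, mul_sum, Real.exp_sum, ← mul_assoc]
  exact integral_fintype_prod_eq_prod fun k x => Real.exp (t * l k * (x ^ 2 - 1))

lemma mgf_sum_mul_sq_sub_one_pi_mem_Ioc {l : ι → ℝ} {t : ℝ}
    (ht : t ^ 2 * ∑ k, l k ^ 2 ≤ 1 / 16) :
    mgf (fun g : ι → ℝ => ∑ k, l k * (g k ^ 2 - 1)) (Measure.pi fun _ => gaussianReal 0 1) t
      ∈ Set.Ioc 0 (Real.exp (4 * (t ^ 2 * ∑ k, l k ^ 2))) := by
  have hk : ∀ k, |t * l k| ≤ 1 / 4 := fun k => by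
    refine abs_le_of_sq_le_sq ?_ (by norm_num)
    calc (t * l k) ^ 2 = t ^ 2 * l k ^ 2 := mul_pow ..
      _ ≤ t ^ 2 * ∑ k, l k ^ 2 := by
        gcongr
        exact single_le_sum (f := fun k => l k ^ 2) (fun _ _ => sq_nonneg _) (mem_univ k)
      _ ≤ (1 / 4) ^ 2 := by linarith
  have hlt : ∀ k, t * l k < 1 / 2 := fun k => by linarith [(abs_le.mp (hk k)).2]
  have hmgf : ∀ k, mgf (fun x => x ^ 2 - 1) (gaussianReal 0 1) (t * l k)
      = Real.exp (-(t * l k)) / √(1 - 2 * (t * l k)) := fun k =>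
    mgf_sq_sub_one_gaussianReal (hlt k)
  simp only [mgf_sum_mul_sq_sub_one_pi, hmgf]
  constructor
  · refine prod_pos fun k _ => div_pos (Real.exp_pos _) (Real.sqrt_pos.mpr ?_)
    linarith [hlt k]
  · calc ∏ k, Real.exp (-(t * l k)) / √(1 - 2 * (t * l k))
        ≤ ∏ k, Real.exp (4 * (t * l k) ^ 2) :=
          prod_le_prod (fun _ _ => by positivity)
            fun k _ => exp_neg_div_sqrt_one_sub_two_mul_le (hk k)
      _ = Real.exp (4 * (t ^ 2 * ∑ k, l k ^ 2)) := by
          simp only [← Real.exp_sum, mul_sum, mul_pow]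

theorem integral_sum_mul_sq_sub_one_pow_le (l : ι → ℝ) (m : ℕ) :
    ∫ g : ι → ℝ, (∑ k, l k * (g k ^ 2 - 1)) ^ (2 * m) ∂(Measure.pi fun _ => gaussianReal 0 1)
      ≤ 2 * Real.exp (1 / 4) * (2 * m).factorial * (16 * ∑ k, l k ^ 2) ^ m := by
  set v := ∑ k, l k ^ 2 with hv
  obtain hv0 | hv0 : v = 0 ∨ 0 < v := (sum_nonneg fun k _ => sq_nonneg (l k)).eq_or_lt'
  · have hl : ∀ k, l k = 0 := fun k => by
      simpa using (sum_eq_zero_iff_of_nonneg fun k _ => sq_nonneg (l k)).mp hv0 k (mem_univ k)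
    rcases m.eq_zero_or_pos with rfl | hm
    · simpa using one_le_mul_of_one_le_of_one_le one_le_two (Real.one_le_exp (by norm_num))
    · simp [hl, hv0, hm.ne']
  set t := (√(16 * v))⁻¹ with ht
  have ht2 : t ^ 2 = (16 * v)⁻¹ := by rw [ht, inv_pow, Real.sq_sqrt (by positivity)]
  have htv : t ^ 2 * v = 1 / 16 := by rw [ht2]; field_simp
  have hpos := mgf_sum_mul_sq_sub_one_pi_mem_Ioc htv.le
  have hneg := mgf_sum_mul_sq_sub_one_pi_mem_Ioc (t := -t) (by rw [neg_sq]; exact htv.le)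
  rw [neg_sq] at hneg
  rw [← hv, htv] at hpos hneg
  have hmoment := pow_mul_integral_pow_le_factorial_mul_mgf (even_two_mul m)
    (mgf_pos_iff.mp hpos.1) (mgf_pos_iff.mp hneg.1)
  rw [pow_mul, ht2, inv_pow, inv_mul_le_iff₀ (by positivity)] at hmoment
  calc _ ≤ (16 * v) ^ m * ((2 * m).factorial * (_ + _)) := hmoment
    _ ≤ (16 * v) ^ m *
        ((2 * m).factorial * (Real.exp (4 * (1 / 16)) + Real.exp (4 * (1 / 16)))) := by
      gcongr
      exacts [hpos.2, hneg.2]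
    _ = _ := by ring_nf

end GaussianChaos

section Trace

open Matrix
open scoped MatrixOrder ComplexOrder

variable {𝕜 m n : Type*} [RCLike 𝕜] [Fintype m] [Fintype n] [DecidableEq n]

lemma trace_conjTranspose_mul_mul_le {S : Matrix n n 𝕜} {c : 𝕜} (hS : S ≤ c • 1)
    (X : Matrix n m 𝕜) : (Xᴴ * S * X).trace ≤ c * (Xᴴ * X).trace := by
  have h := (PosSemidef.conjTranspose_mul_mul_same (Matrix.le_iff.mp hS) X).trace_nonneg
  simpa [Matrix.mul_sub, Matrix.sub_mul] using h

lemma trace_conjTranspose_mul_self_mul_mul_le {R : Matrix n n 𝕜} {c : 𝕜} (hc : 0 ≤ c)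
    (hR : R.IsHermitian) (hRR : R * R ≤ c • 1) (B : Matrix n n 𝕜) :
    ((R * B * R)ᴴ * (R * B * R)).trace ≤ c ^ 2 * (Bᴴ * B).trace := by
  calc ((R * B * R)ᴴ * (R * B * R)).trace = ((B * R)ᴴ * (R * R) * (B * R)).trace := by
        simp only [conjTranspose_mul, hR.eq, Matrix.mul_assoc]
    _ ≤ c * ((B * R)ᴴ * (B * R)).trace := trace_conjTranspose_mul_mul_le hRR _
    _ = c * (Bᴴᴴ * (R * R) * Bᴴ).trace := by
        rw [trace_mul_comm]
        simp only [conjTranspose_mul, conjTranspose_conjTranspose, hR.eq, Matrix.mul_assoc]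
    _ ≤ c * (c * (Bᴴᴴ * Bᴴ).trace) :=
        mul_le_mul_of_nonneg_left (trace_conjTranspose_mul_mul_le hRR _) hc
    _ = c ^ 2 * (Bᴴ * B).trace := by rw [conjTranspose_conjTranspose, trace_mul_comm]; ring

lemma trace_conjTranspose_mul_self_le {S : Matrix n n 𝕜} {c : 𝕜} (hc : 0 ≤ c)
    (hS0 : 0 ≤ S) (hS : S ≤ c • 1) : (Sᴴ * S).trace ≤ c ^ 2 * Fintype.card n := by
  set R := CFC.sqrt S
  have hR : Rᴴ = R := (CFC.sqrt_nonneg S).isSelfAdjoint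
  have hRR : R * R = S := CFC.sqrt_mul_sqrt_self S
  calc (Sᴴ * S).trace = (Rᴴ * S * R).trace := by
        rw [trace_mul_cycle, hR, hRR, (nonneg_iff_posSemidef.mp hS0).isHermitian]
    _ ≤ c * (Rᴴ * R).trace := trace_conjTranspose_mul_mul_le hS R
    _ = c * S.trace := by rw [hR, hRR]
    _ ≤ c * (c * Fintype.card n) := by
        gcongr
        simpa using trace_conjTranspose_mul_mul_le hS (1 : Matrix n n 𝕜)
    _ = c ^ 2 * Fintype.card n := by ring

lemma trace_conjTranspose_mul_self_eq_sum_eigenvalues_sq {G : Matrix n n 𝕜}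
    (hG : G.IsHermitian) : (Gᴴ * G).trace = ∑ k, (hG.eigenvalues k : 𝕜) ^ 2 := by
  rw [hG.eq]
  conv_lhs => rw [hG.spectral_theorem, ← map_mul, Unitary.conjStarAlgAut_apply, trace_mul_cycle,
    Unitary.coe_star_mul_self, Matrix.one_mul, diagonal_mul_diagonal, trace_diagonal]
  simp only [Function.comp_apply, sq]

end Trace

section SelfAdjointPart

open Matrix

variable {n : Type*} [Fintype n] (G : Matrix n n ℝ)

lemma trace_selfAdjointPart : (selfAdjointPart ℝ G : Matrix n n ℝ).trace = G.trace := by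
  simp only [selfAdjointPart_apply_coe, star_eq_conjTranspose, trace_smul, trace_add,
    conjTranspose_eq_transpose_of_trivial, trace_transpose, invOf_eq_inv, smul_eq_mul]
  ring

lemma dotProduct_selfAdjointPart_mulVec (x : n → ℝ) :
    x ⬝ᵥ (selfAdjointPart ℝ G : Matrix n n ℝ) *ᵥ x = x ⬝ᵥ G *ᵥ x := by
  have h : x ⬝ᵥ Gᵀ *ᵥ x = x ⬝ᵥ G *ᵥ x := by
    rw [mulVec_transpose, dotProduct_comm, ← dotProduct_mulVec]
  simp only [selfAdjointPart_apply_coe, star_eq_conjTranspose,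
    conjTranspose_eq_transpose_of_trivial, smul_mulVec, add_mulVec, dotProduct_smul,
    dotProduct_add, h, invOf_eq_inv, smul_eq_mul]
  ring

lemma trace_conjTranspose_selfAdjointPart_mul_self_le :
    ((selfAdjointPart ℝ G : Matrix n n ℝ)ᴴ * (selfAdjointPart ℝ G : Matrix n n ℝ)).trace
      ≤ (Gᴴ * G).trace := by
  have h := (posSemidef_conjTranspose_mul_self (G - Gᵀ)).trace_nonneg
  have htr : (Gᵀ * Gᵀ).trace = (G * G).trace := by rw [← transpose_mul, trace_transpose]
  simp only [conjTranspose_eq_transpose_of_trivial, transpose_sub, transpose_transpose,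
    Matrix.mul_sub, Matrix.sub_mul, trace_sub, htr, trace_mul_comm G Gᵀ] at h
  simp only [selfAdjointPart_apply_coe, star_eq_conjTranspose,
    conjTranspose_eq_transpose_of_trivial, transpose_smul, transpose_add,
    transpose_transpose, Matrix.mul_add, Matrix.add_mul, smul_mul_smul_comm, trace_smul,
    trace_add, htr, trace_mul_comm G Gᵀ, invOf_eq_inv, smul_eq_mul]
  linarith

end SelfAdjointPart

section GaussianQuadraticForm

open Matrix WithLp
open scoped MatrixOrder

variable {ι : Type*} [Fintype ι]

lemma sum_sum_mul_mul_eq_dotProduct_mulVec (S : Matrix ι ι ℝ) (v : ι → ℝ) :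
    ∑ i, ∑ j, v i * S i j * v j = v ⬝ᵥ S *ᵥ v := by
  simp only [dotProduct, mulVec, mul_sum, mul_assoc]

lemma dotProduct_mulVec_sum_smul_eigenvectorBasis [DecidableEq ι] {G : Matrix ι ι ℝ}
    (hG : G.IsHermitian) (g : ι → ℝ) :
    ofLp (∑ k, g k • hG.eigenvectorBasis k) ⬝ᵥ G *ᵥ ofLp (∑ k, g k • hG.eigenvectorBasis k)
      = ∑ k, hG.eigenvalues k * g k ^ 2 := by
  have hT : ∀ k, toEuclideanCLM (𝕜 := ℝ) G (hG.eigenvectorBasis k)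
      = hG.eigenvalues k • hG.eigenvectorBasis k := fun k =>
    congrArg (toLp 2) (hG.mulVec_eigenvectorBasis k)
  rw [← inner_toEuclideanCLM]
  simp only [map_sum, map_smul, hT, smul_smul]
  rw [hG.eigenvectorBasis.orthonormal.inner_sum]
  exact sum_congr rfl fun k _ => by rw [conj_trivial]; ring

lemma integral_pow_quadraticForm_stdGaussian_le_of_isHermitian {G : Matrix ι ι ℝ}
    (hG : G.IsHermitian) (m : ℕ) :
    ∫ x, (x ⬝ᵥ G *ᵥ x - G.trace) ^ (2 * m) ∂(stdGaussian (EuclideanSpace ℝ ι))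
      ≤ 2 * Real.exp (1 / 4) * (2 * m).factorial * (16 * (Gᴴ * G).trace) ^ m := by
  classical
  rw [stdGaussian_eq_map_pi_orthonormalBasis hG.eigenvectorBasis,
    integral_map (Measurable.aemeasurable (by fun_prop)) (by unfold dotProduct mulVec; fun_prop)]
  have h := integral_sum_mul_sq_sub_one_pow_le hG.eigenvalues m
  simpa only [dotProduct_mulVec_sum_smul_eigenvectorBasis, hG.trace_eq_sum_eigenvalues,
    trace_conjTranspose_mul_self_eq_sum_eigenvalues_sq hG, RCLike.ofReal_real_eq_id, id_eq,
    mul_sub, mul_one, sum_sub_distrib] using h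

theorem integral_pow_quadraticForm_stdGaussian_le (G : Matrix ι ι ℝ) (m : ℕ) :
    ∫ x, (x ⬝ᵥ G *ᵥ x - G.trace) ^ (2 * m) ∂(stdGaussian (EuclideanSpace ℝ ι))
      ≤ 2 * Real.exp (1 / 4) * (2 * m).factorial * (16 * (Gᴴ * G).trace) ^ m := by
  have h := integral_pow_quadraticForm_stdGaussian_le_of_isHermitian (selfAdjointPart ℝ G).2 m
  simp only [dotProduct_selfAdjointPart_mulVec, trace_selfAdjointPart] at h
  have htr := (posSemidef_conjTranspose_mul_self
    (selfAdjointPart ℝ G : Matrix ι ι ℝ)).trace_nonneg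
  refine h.trans ?_
  gcongr
  exact trace_conjTranspose_selfAdjointPart_mul_self_le G

theorem integral_pow_quadraticForm_multivariateGaussian_le [DecidableEq ι] {S : Matrix ι ι ℝ}
    {c : ℝ} (hc : 0 ≤ c) (hS0 : 0 ≤ S) (hS : S ≤ c • 1) (B : Matrix ι ι ℝ) (m : ℕ) :
    ∫ x, (x ⬝ᵥ B *ᵥ x - (B * S).trace) ^ (2 * m) ∂(multivariateGaussian 0 S)
      ≤ 2 * Real.exp (1 / 4) * (2 * m).factorial * (16 * (c ^ 2 * (Bᴴ * B).trace)) ^ m := by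
  set R := CFC.sqrt S with hRdef
  have hR : Rᴴ = R := (CFC.sqrt_nonneg S).isSelfAdjoint
  have hRR : R * R = S := CFC.sqrt_mul_sqrt_self S
  have hquad : ∀ x : ι → ℝ, (R *ᵥ x) ⬝ᵥ B *ᵥ R *ᵥ x = x ⬝ᵥ (R * B * R) *ᵥ x := fun x => by
    rw [← mulVec_mulVec, ← mulVec_mulVec, dotProduct_mulVec x, ← mulVec_transpose,
      ← conjTranspose_eq_transpose_of_trivial, hR]
  have htrace : (B * S).trace = (R * B * R).trace := by
    rw [trace_mul_cycle, hRR, trace_mul_comm]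
  rw [multivariateGaussian, integral_map (by fun_prop) (by unfold dotProduct mulVec; fun_prop)]
  simp only [zero_add, ofLp_toEuclideanCLM, ← hRdef, hquad, htrace]
  refine (integral_pow_quadraticForm_stdGaussian_le (R * B * R) m).trans ?_
  have htr := (posSemidef_conjTranspose_mul_self (R * B * R)).trace_nonneg
  gcongr
  exact trace_conjTranspose_mul_self_mul_mul_le hc hR (hRR ▸ hS) B

namespace IsGaussianVec

variable {Ω : Type*} [MeasureSpace Ω] [IsProbabilityMeasure (ℙ : Measure Ω)] {p : ℕ}
  {Z : Ω → Fin p → ℝ} {S : Matrix (Fin p) (Fin p) ℝ}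

lemma map_toLp_eq_multivariateGaussian (hZ : IsGaussianVec Z S) (hZm : AEMeasurable Z ℙ)
    (hS : S.PosSemidef) : Measure.map (fun ω => toLp 2 (Z ω)) ℙ = multivariateGaussian 0 S := by
  have hm : AEMeasurable (fun ω => toLp 2 (Z ω)) ℙ := by fun_prop
  have := Measure.isProbabilityMeasure_map hm
  refine Measure.ext_of_charFun (funext fun a => ?_)
  have hinner : ∀ ω, inner ℝ (toLp 2 (Z ω)) a = ∑ i, a i * Z ω i := fun ω => by
    simp only [PiLp.inner_apply, RCLike.inner_apply, conj_trivial]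
  have hnonneg : 0 ≤ a ⬝ᵥ S *ᵥ a := hS.dotProduct_mulVec_nonneg a
  calc charFun (Measure.map (fun ω => toLp 2 (Z ω)) ℙ) a
      = charFun (Measure.map (fun ω => ∑ i, a i * Z ω i) ℙ) 1 := by
        rw [charFun_apply, charFun_apply_real, integral_map hm (by fun_prop),
          integral_map (by fun_prop) (by fun_prop)]
        simp only [hinner, Complex.ofReal_one, one_mul]
    _ = charFun (multivariateGaussian 0 S) a := by
        rw [hZ a, charFun_gaussianReal, charFun_multivariateGaussian hS,
          sum_sum_mul_mul_eq_dotProduct_mulVec,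
          Real.coe_toNNReal _ hnonneg]
        simp

theorem integral_pow_quadraticForm_le (hZ : IsGaussianVec Z S) (hZm : AEMeasurable Z ℙ) {c : ℝ}
    (hc : 0 ≤ c) (hS0 : 0 ≤ S) (hS : S ≤ c • 1) (B : Matrix (Fin p) (Fin p) ℝ) (m : ℕ) :
    ∫ ω, (Z ω ⬝ᵥ B *ᵥ Z ω - (B * S).trace) ^ (2 * m) ∂ℙ
      ≤ 2 * Real.exp (1 / 4) * (2 * m).factorial * (16 * (c ^ 2 * (Bᴴ * B).trace)) ^ m := by
  have h := integral_pow_quadraticForm_multivariateGaussian_le hc hS0 hS B m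
  rwa [← hZ.map_toLp_eq_multivariateGaussian hZm (nonneg_iff_posSemidef.mp hS0),
    integral_map (by fun_prop) (by unfold dotProduct mulVec; fun_prop)] at h

end IsGaussianVec

end GaussianQuadraticForm

section WeightedCovariance

open Matrix
open scoped MatrixOrder

lemma trace_conjTranspose_hadamard_mul_self_le {m n : Type*} [Fintype m] [Fintype n] {a : ℝ}
    {A : Matrix m n ℝ} (hA : ∀ i j, |A i j| ≤ a) (S : Matrix m n ℝ) :
    ((A ⊙ S)ᴴ * (A ⊙ S)).trace ≤ a ^ 2 * (Sᴴ * S).trace := by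
  simp only [trace, diag_apply, mul_apply, conjTranspose_apply, hadamard_apply, star_trivial,
    mul_sum, ← sq, mul_pow]
  exact sum_le_sum fun i _ => sum_le_sum fun j _ => mul_le_mul_of_nonneg_right
    (sq_le_sq' (abs_le.mp (hA j i)).1 (abs_le.mp (hA j i)).2) (sq_nonneg _)

variable {ι : Type*} [Fintype ι] {S : Matrix ι ι ℝ}

lemma sum_sum_mul_mul_sub_eq (hS : S.IsSymm) (A : Matrix ι ι ℝ) (z : ι → ℝ) :
    ∑ i, ∑ j, A i j * S i j * (z i * z j - S i j)
      = z ⬝ᵥ (A ⊙ S) *ᵥ z - ((A ⊙ S) * S).trace := by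
  rw [← sum_sum_mul_mul_eq_dotProduct_mulVec]
  simp only [trace, diag_apply, mul_apply, hadamard_apply, hS.apply, ← sum_sub_distrib]
  exact sum_congr rfl fun i _ => sum_congr rfl fun j _ => by ring

lemma nonneg_of_sum_sum_mul_mul_nonneg (hS : S.IsSymm)
    (h : ∀ v : ι → ℝ, 0 ≤ ∑ i, ∑ j, v i * S i j * v j) : 0 ≤ S :=
  nonneg_iff_posSemidef.mpr <| .of_dotProduct_mulVec_nonneg hS fun v => by
    simpa only [sum_sum_mul_mul_eq_dotProduct_mulVec, star_trivial] using h v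

lemma le_smul_one_of_sum_sum_mul_mul_le [DecidableEq ι] {c : ℝ} (hS : S.IsSymm)
    (h : ∀ v : ι → ℝ, ∑ i, ∑ j, v i * S i j * v j ≤ c * ∑ i, v i ^ 2) : S ≤ c • 1 := by
  refine Matrix.le_iff.mpr (.of_dotProduct_mulVec_nonneg ((isSymm_one.smul c).sub hS) fun v => ?_)
  have hone : v ⬝ᵥ v = ∑ i, v i ^ 2 := by simp only [dotProduct, sq]
  simpa only [star_trivial, sub_mulVec, smul_mulVec, one_mulVec, dotProduct_sub, dotProduct_smul,
    smul_eq_mul, hone, ← sum_sum_mul_mul_eq_dotProduct_mulVec, sub_nonneg] using h v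

end WeightedCovariance

lemma abs_two_mul_sub_two_div_sq_le {n : ℝ} (hn : 1 ≤ n) : |2 * (n - 2) / n ^ 2| ≤ 2 / n := by
  have h : |n - 2| ≤ n := abs_le.mpr ⟨by linarith, by linarith⟩
  rw [abs_div, abs_mul, abs_two, abs_of_nonneg (sq_nonneg n)]
  calc 2 * |n - 2| / n ^ 2 ≤ 2 * n / n ^ 2 := by gcongr
    _ = 2 / n := by field_simp

theorem stmt12_general {a M₀ : ℝ} (hM₀ : 0 ≤ M₀) {K₀ : ℕ} (hK : Even K₀) {p n : ℕ} (hn : 1 ≤ n)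
    {S : Matrix (Fin p) (Fin p) ℝ} (hS : S.IsSymm)
    (hS0 : ∀ v : Fin p → ℝ, 0 ≤ ∑ i, ∑ j, v i * S i j * v j)
    (hSM : ∀ v : Fin p → ℝ, ∑ i, ∑ j, v i * S i j * v j ≤ M₀ * ∑ i, v i ^ 2)
    {A : Matrix (Fin p) (Fin p) ℝ} (hA : ∀ i j, |A i j| ≤ a)
    {Ω : Type*} [MeasureSpace Ω] [IsProbabilityMeasure (ℙ : Measure Ω)]
    {Z : Ω → Fin p → ℝ} (hZm : AEMeasurable Z ℙ) (hZ : IsGaussianVec Z S) :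
    ∫ ω, ((2 * ((n : ℝ) - 2) / (n : ℝ) ^ 2) * ∑ i : Fin p, ∑ j : Fin p,
        A i j * S i j * (Z ω i * Z ω j - S i j)) ^ K₀ ∂ℙ
      ≤ 2 * Real.exp (1 / 4) * K₀.factorial * (64 * a ^ 2 * M₀ ^ 4) ^ (K₀ / 2)
        * (p : ℝ) ^ (K₀ / 2) / (n : ℝ) ^ K₀ := by
  obtain ⟨m, rfl⟩ := even_iff_exists_two_mul.mp hK
  have hn' : (1 : ℝ) ≤ n := mod_cast hn
  have hS0' := nonneg_of_sum_sum_mul_mul_nonneg hS hS0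
  have hSM' := le_smul_one_of_sum_sum_mul_mul_le hS hSM
  set B := Matrix.hadamard A S
  have hfrob : (B.conjTranspose * B).trace ≤ a ^ 2 * (M₀ ^ 2 * p) := by
    refine (trace_conjTranspose_hadamard_mul_self_le hA S).trans ?_
    gcongr
    simpa only [Fintype.card_fin] using trace_conjTranspose_mul_self_le hM₀ hS0' hSM'
  have hfrob0 := (Matrix.posSemidef_conjTranspose_mul_self B).trace_nonneg
  simp only [mul_pow _ _ (2 * m), integral_const_mul, sum_sum_mul_mul_sub_eq hS]
  calc _ ≤ (2 / (n : ℝ)) ^ (2 * m) * (2 * Real.exp (1 / 4) * (2 * m).factorial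
        * (16 * (M₀ ^ 2 * (a ^ 2 * (M₀ ^ 2 * p)))) ^ m) := by
        rw [← (even_two_mul m).pow_abs]
        gcongr
        · exact integral_nonneg fun _ => (even_two_mul m).pow_nonneg _
        · exact abs_two_mul_sub_two_div_sq_le hn'
        · refine (hZ.integral_pow_quadraticForm_le hZm hM₀ hS0' hSM' B m).trans ?_
          gcongr
    _ = _ := by
        rw [Nat.mul_div_cancel_left m two_pos, div_pow, pow_mul 2 2 m,
          show 64 * a ^ 2 * M₀ ^ 4 = 2 ^ 2 * (16 * (M₀ ^ 2 * (a ^ 2 * M₀ ^ 2))) by ring]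
        simp only [mul_pow]
        ring

/-- For `Z ∼ N_p(0,Σ)` with `Σ ∈ 𝓕_α`, `|Ā_ij| ≤ 2`, and
`Y = (2(n-2)/n²) ∑_{i,j} Ā_ij σ_ij (z_i z_j − σ_ij)`, for any even `K₀ ≥ 2`
there is `C` with `𝔼 Y^{K₀} ≤ C p^{K₀/2}/n^{K₀}` for `n ≥ 3`, `1 ≤ τ ≤ p`. -/
theorem stmt12 (M M₀ α : ℝ) (hM : 0 < M) (hM₀ : 0 < M₀) (hα : 0 < α)
    (K₀ : ℕ) (hK : 2 ≤ K₀) (hKeven : Even K₀) :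
    ∃ C : ℝ, 0 < C ∧
      ∀ (p n τ : ℕ), 3 ≤ n → 1 ≤ τ → τ ≤ p →
      ∀ (S : Matrix (Fin p) (Fin p) ℝ), S.IsSymm →
        (∀ v : Fin p → ℝ, 0 ≤ ∑ i, ∑ j, v i * S i j * v j) →
        (∀ v : Fin p → ℝ, ∑ i, ∑ j, v i * S i j * v j ≤ M₀ * ∑ i, v i ^ 2) →
        (∀ k : ℕ, 1 ≤ k → ∀ j : Fin p,
            ∑ i ∈ Finset.univ.filter
                (fun i : Fin p => k < ((i : ℤ) - (j : ℤ)).natAbs),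
              |S i j| ≤ M * (k : ℝ) ^ (-α)) →
      ∀ (A : Matrix (Fin p) (Fin p) ℝ), (∀ i j, |A i j| ≤ 2) →
      ∀ (Ω : Type) (_ : MeasureSpace Ω)
        (_ : IsProbabilityMeasure (ℙ : Measure Ω))
        (Z : Ω → Fin p → ℝ), Measurable Z → IsGaussianVec Z S →
      (∫ ω, ((2 * ((n : ℝ) - 2) / (n : ℝ) ^ 2) * ∑ i : Fin p, ∑ j : Fin p,
            A i j * S i j * (Z ω i * Z ω j - S i j)) ^ K₀ ∂ℙ)
        ≤ C * (p : ℝ) ^ (K₀ / 2) / (n : ℝ) ^ K₀ := by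
  exact ⟨2 * Real.exp (1 / 4) * K₀.factorial * (64 * 2 ^ 2 * M₀ ^ 4) ^ (K₀ / 2), by positivity,
    fun _ _ _ hn _ _ _ hS hS0 hSM _ _ hA _ _ _ _ hZm hZ =>
      stmt12_general hM₀.le hKeven (by lia) hS hS0 hSM hA hZm.aemeasurable hZ⟩
end
end

section
/- Let $Z_1, \dots, Z_{n-1}$ be i.i.d. $N_p(0,\Sigma)$ with $\Sigma \in \mathcal{F}_\alpha$, and define $h(Z_m, Z_l) = \sum_{1\le i,j\le p} 2 b_n \bar{b}_{ij}^{(\tau)} (z_{mi}^2 - \sigma_{ii})(z_{lj}^2 - \sigma_{jj})$ with $b_n = \frac{n}{(n+1)(n-2)}$ and $|\bar{b}_{ij}^{(\tau)}| \le C_n$. Then for any even $K_0 \ge 2$ there exists $C$ such that $\mathbb{E}[h(Z_1, Z_2)^{K_0}] \le C (C_n p)^{K_0}/n^{K_0}$, where the bound uses $\sum_{1\le i_1,\dots,i_{K_0}\le p}|\mathbb{E}\prod_{j=1}^{K_0}(z_{1 i_j}^2 - \sigma_{i_j i_j})| \le C p^{K_0/2}$ and independence of $Z_1, Z_2$. 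-/
open MeasureTheory ProbabilityTheory Finset

noncomputable section

/-!
Conditionally on `Z₂`, `h` is a linear form in the centered squares of `Z₁`, and conversely, so it
suffices to have a Khintchine-type inequality `𝔼 (∑ cᵢ (zᵢ² - σᵢᵢ))²ᵏ ≤ A (∑ cᵢ²)ᵏ` for one Gaussian
vector: apply it to `Z₁` with `Z₂` fixed, then to each row of coefficients with `Z₂` random,
combining the rows by Minkowski's inequality in `Lᵏ`.

Write `Z = √Σ g` with `g` standard Gaussian. The linear form becomes `gᵀ T g - tr T` with
`T = √Σ diag(c) √Σ`, and in an eigenbasis of `T` this is a weighted sum of independent centered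
`χ²₁` variables, whose exponential moments control its even moments through `tr T²`. Finally
`tr T² ≤ M₀² ∑ cᵢ²`, because `Σ ≤ M₀`.
-/

open Matrix WithLp
open scoped MatrixOrder Nat

section ExponentialMoments

lemma gaussianPDFReal_mul_exp_mul_sq (s x : ℝ) :
    gaussianPDFReal 0 1 x * Real.exp (s * x ^ 2)
      = (√(2 * Real.pi))⁻¹ * Real.exp (-(1 / 2 - s) * x ^ 2) := by
  simp only [gaussianPDFReal, NNReal.coe_one, mul_one, mul_assoc, sub_zero]
  rw [← Real.exp_add]
  congr 2
  ring

lemma integrable_exp_mul_sq_gaussianReal {s : ℝ} (hs : s < 1 / 2) :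
    Integrable (fun x => Real.exp (s * x ^ 2)) (gaussianReal 0 1) := by
  rw [gaussianReal_of_var_ne_zero _ one_ne_zero,
    integrable_withDensity_iff_integrable_smul' (measurable_gaussianPDF _ _)
      (ae_of_all _ fun _ => gaussianPDF_lt_top)]
  simp only [toReal_gaussianPDF, smul_eq_mul, gaussianPDFReal_mul_exp_mul_sq]
  exact (integrable_exp_neg_mul_sq (by linarith)).const_mul _

lemma integral_exp_mul_sq_gaussianReal {s : ℝ} (hs : s < 1 / 2) :
    ∫ x, Real.exp (s * x ^ 2) ∂gaussianReal 0 1 = (√(1 - 2 * s))⁻¹ := by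
  rw [integral_gaussianReal_eq_integral_smul one_ne_zero]
  simp only [smul_eq_mul, gaussianPDFReal_mul_exp_mul_sq]
  rw [integral_const_mul, integral_gaussian, ← Real.sqrt_inv, ← Real.sqrt_inv,
    ← Real.sqrt_mul (by positivity)]
  have hs' : 1 - 2 * s ≠ 0 := by linarith
  congr 1
  field_simp

lemma inv_sqrt_one_sub_le_exp {u : ℝ} (hu : |u| ≤ 1 / 2) :
    (√(1 - u))⁻¹ ≤ Real.exp (u / 2 + u ^ 2) := by
  have hu' := abs_le.1 hu
  have hlog : -(u + 2 * u ^ 2) ≤ Real.log (1 - u) := by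
    have h := Real.abs_log_sub_add_sum_range_le (show |u| < 1 by linarith) 1
    have h' : |u| ^ 2 / (1 - |u|) ≤ 2 * u ^ 2 := by
      rw [div_le_iff₀ (by linarith), sq_abs]
      nlinarith [mul_nonneg (sq_nonneg u) (sub_nonneg.2 hu)]
    simp only [sum_range_one, zero_add, pow_one, Nat.cast_zero, div_one, one_add_one_eq_two] at h
    linarith [(abs_le.1 (h.trans h')).1]
  rw [inv_le_comm₀ (Real.sqrt_pos.2 (by linarith)) (Real.exp_pos _), ← Real.exp_neg]
  refine Real.le_sqrt_of_sq_le ?_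
  rw [← Real.exp_nat_mul, ← Real.le_log_iff_exp_le (by linarith)]
  push_cast
  linarith

lemma integral_exp_mul_sq_sub_one_gaussianReal_le {s : ℝ} (hs : |s| ≤ 1 / 4) :
    ∫ x, Real.exp (s * (x ^ 2 - 1)) ∂gaussianReal 0 1 ≤ Real.exp (4 * s ^ 2) := by
  have hs' := (abs_le.1 hs).2
  calc ∫ x, Real.exp (s * (x ^ 2 - 1)) ∂gaussianReal 0 1
      = Real.exp (-s) * (√(1 - 2 * s))⁻¹ := by
        rw [← integral_exp_mul_sq_gaussianReal (by linarith), ← integral_const_mul]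
        simp only [← Real.exp_add]
        ring_nf
    _ ≤ Real.exp (-s) * Real.exp (2 * s / 2 + (2 * s) ^ 2) := by
        gcongr
        exact inv_sqrt_one_sub_le_exp (by rw [abs_mul, abs_two]; linarith)
    _ = Real.exp (4 * s ^ 2) := by
        rw [← Real.exp_add]
        ring_nf

lemma lintegral_exp_sum_mul_sq_sub_one_le {ι : Type*} [Fintype ι] {d : ι → ℝ}
    (hd : ∀ i, |d i| ≤ 1 / 4) :
    ∫⁻ g, ENNReal.ofReal (Real.exp (∑ i, d i * (g i ^ 2 - 1)))
        ∂Measure.pi (fun _ : ι => gaussianReal 0 1)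
      ≤ ENNReal.ofReal (Real.exp (4 * ∑ i, d i ^ 2)) := by
  have hint (i : ι) :
      Integrable (fun x : ℝ => Real.exp (d i * (x ^ 2 - 1))) (gaussianReal 0 1) := by
    have hi := (abs_le.1 (hd i)).2
    refine ((integrable_exp_mul_sq_gaussianReal (s := d i) (by linarith)).const_mul
      (Real.exp (-d i))).congr (ae_of_all _ fun x => ?_)
    simp only [← Real.exp_add]
    ring_nf
  simp only [Real.exp_sum]
  rw [← ofReal_integral_eq_lintegral_ofReal (Integrable.fintype_prod hint)
      (ae_of_all _ fun x => by positivity),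
    integral_fintype_prod_eq_prod (f := fun i (x : ℝ) => Real.exp (d i * (x ^ 2 - 1))),
    mul_sum, Real.exp_sum]
  gcongr with i
  exact integral_exp_mul_sq_sub_one_gaussianReal_le (hd i)

lemma pow_two_mul_le_factorial_mul_cosh (x : ℝ) (k : ℕ) :
    x ^ (2 * k) ≤ (2 * k)! * Real.cosh x := by
  rw [← div_le_iff₀' (by positivity)]
  exact le_hasSum (Real.hasSum_cosh x) k fun j _ => by
    have := (even_two_mul j).pow_nonneg x
    positivity

lemma lintegral_pow_le_of_lintegral_exp_le {Ω : Type*} [MeasurableSpace Ω] {μ : Measure Ω}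
    {X : Ω → ℝ} (hX : Measurable X) {t : ℝ} (ht : 0 < t) {B : ENNReal}
    (hpos : ∫⁻ ω, ENNReal.ofReal (Real.exp (t * X ω)) ∂μ ≤ B)
    (hneg : ∫⁻ ω, ENNReal.ofReal (Real.exp (-(t * X ω))) ∂μ ≤ B) (k : ℕ) :
    ∫⁻ ω, ENNReal.ofReal (X ω ^ (2 * k)) ∂μ
      ≤ ENNReal.ofReal ((2 * k)! / t ^ (2 * k)) * B := by
  have hpt (ω : Ω) : ENNReal.ofReal (X ω ^ (2 * k))
      ≤ ENNReal.ofReal ((2 * k)! / t ^ (2 * k)) * (2⁻¹ *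
        (ENNReal.ofReal (Real.exp (t * X ω)) + ENNReal.ofReal (Real.exp (-(t * X ω))))) := by
    have h2 : (2⁻¹ : ENNReal) = ENNReal.ofReal 2⁻¹ := by
      rw [ENNReal.ofReal_inv_of_pos two_pos, ENNReal.ofReal_ofNat]
    rw [h2, ← ENNReal.ofReal_add (by positivity) (by positivity),
      ← ENNReal.ofReal_mul (by positivity), ← ENNReal.ofReal_mul (by positivity)]
    refine ENNReal.ofReal_le_ofReal ?_
    have h := pow_two_mul_le_factorial_mul_cosh (t * X ω) k
    rw [mul_pow, ← le_div_iff₀' (by positivity)] at h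
    rw [Real.cosh_eq] at h
    exact h.trans_eq (by ring)
  calc _ ≤ _ := lintegral_mono hpt
    _ = ENNReal.ofReal ((2 * k)! / t ^ (2 * k)) * (2⁻¹ *
        (∫⁻ ω, ENNReal.ofReal (Real.exp (t * X ω)) ∂μ
          + ∫⁻ ω, ENNReal.ofReal (Real.exp (-(t * X ω))) ∂μ)) := by
        rw [lintegral_const_mul _ (by fun_prop), lintegral_const_mul _ (by fun_prop),
          lintegral_add_left (by fun_prop)]
    _ ≤ ENNReal.ofReal ((2 * k)! / t ^ (2 * k)) * (2⁻¹ * (B + B)) := by gcongr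
    _ = ENNReal.ofReal ((2 * k)! / t ^ (2 * k)) * B := by
        rw [← two_mul, ENNReal.inv_mul_cancel_left two_ne_zero ENNReal.ofNat_ne_top]

lemma lintegral_pow_sum_mul_sq_sub_one_le {ι : Type*} [Fintype ι] (d : ι → ℝ) (k : ℕ) :
    ∫⁻ g, ENNReal.ofReal ((∑ i, d i * (g i ^ 2 - 1)) ^ (2 * k))
        ∂Measure.pi (fun _ : ι => gaussianReal 0 1)
      ≤ ENNReal.ofReal (2 * (2 * k)! * (16 * ∑ i, d i ^ 2) ^ k) := by
  set V := ∑ i, d i ^ 2 with hV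
  rcases (show 0 ≤ V by positivity).eq_or_lt' with hV₀ | hV₀
  · have hd (i : ι) : d i = 0 := by
      simpa using (sum_eq_zero_iff_of_nonneg fun i _ => sq_nonneg (d i)).1 hV₀ i
    rcases eq_or_ne k 0 with rfl | hk <;> simp [*]
  -- The largest exponent for which every `|t * d i|` is guaranteed to be at most `1 / 4`.
  set t := 1 / (4 * √V) with ht
  have htV : t ^ 2 * V = 1 / 16 := by
    rw [ht, div_pow, mul_pow, Real.sq_sqrt hV₀.le]
    field_simp
    norm_num
  have hexp {e : ι → ℝ} (he : ∀ i, e i ^ 2 = t ^ 2 * d i ^ 2) :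
      ∫⁻ g, ENNReal.ofReal (Real.exp (∑ i, e i * (g i ^ 2 - 1)))
        ∂Measure.pi (fun _ : ι => gaussianReal 0 1) ≤ ENNReal.ofReal 2 := by
    have hsum : ∑ i, e i ^ 2 = 1 / 16 := by simp only [he, ← mul_sum, ← hV, htV]
    have hle (i : ι) : |e i| ≤ 1 / 4 := by
      refine abs_le_of_sq_le_sq ?_ (by norm_num)
      calc e i ^ 2 ≤ ∑ i, e i ^ 2 :=
            single_le_sum (f := fun i => e i ^ 2) (fun _ _ => sq_nonneg _) (mem_univ i)
        _ = (1 / 4) ^ 2 := by rw [hsum]; norm_num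
    refine (lintegral_exp_sum_mul_sq_sub_one_le hle).trans (ENNReal.ofReal_le_ofReal ?_)
    rw [hsum]
    refine (Real.exp_bound_div_one_sub_of_interval (by norm_num) (by norm_num)).trans ?_
    norm_num
  have h := lintegral_pow_le_of_lintegral_exp_le (X := fun g : ι → ℝ => ∑ i, d i * (g i ^ 2 - 1))
    (by fun_prop) (by positivity : 0 < t)
    (by simpa only [mul_sum, mul_assoc] using hexp (e := fun i => t * d i) fun i => by ring)
    (by simpa only [← sum_neg_distrib, mul_sum, mul_assoc, neg_mul] using
      hexp (e := fun i => -(t * d i)) fun i => by ring) k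
  refine h.trans_eq ?_
  have h16 : 16 * V = (t ^ 2)⁻¹ := eq_inv_of_mul_eq_one_left (by linarith)
  rw [← ENNReal.ofReal_mul (by positivity), pow_mul, h16, inv_pow]
  ring_nf

end ExponentialMoments

section QuadraticForms

variable {ι : Type*} [Fintype ι]

lemma trace_mul_self_eq_sum_eigenvalues_sq [DecidableEq ι] {A : Matrix ι ι ℝ} (hA : A.IsHermitian) :
    (A * A).trace = ∑ i, hA.eigenvalues i ^ 2 := by
  conv_lhs => rw [hA.spectral_theorem]
  rw [← map_mul, Unitary.conjStarAlgAut_apply, trace_mul_cycle, Unitary.coe_star_mul_self, one_mul,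
    diagonal_mul_diagonal, trace_diagonal]
  simp [sq]

lemma dotProduct_mulVec_sum_smul_eigenvectorBasis_s15 [DecidableEq ι] {A : Matrix ι ι ℝ}
    (hA : A.IsHermitian) (x : ι → ℝ) :
    (∑ i, x i • hA.eigenvectorBasis i).ofLp ⬝ᵥ A *ᵥ (∑ i, x i • hA.eigenvectorBasis i).ofLp
      = ∑ i, hA.eigenvalues i * x i ^ 2 := by
  have hbasis (i : ι) : toEuclideanCLM (𝕜 := ℝ) A (hA.eigenvectorBasis i)
      = hA.eigenvalues i • hA.eigenvectorBasis i :=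
    ofLp_injective 2 (hA.mulVec_eigenvectorBasis i)
  rw [← inner_toEuclideanCLM, map_sum]
  simp only [map_smul, hbasis, smul_smul, hA.eigenvectorBasis.orthonormal.inner_sum, conj_trivial]
  exact sum_congr rfl fun i _ => by ring

lemma lintegral_pow_dotProduct_mulVec_sub_trace_le {A : Matrix ι ι ℝ} (hA : A.IsHermitian)
    (k : ℕ) :
    ∫⁻ g, ENNReal.ofReal ((g.ofLp ⬝ᵥ A *ᵥ g.ofLp - A.trace) ^ (2 * k))
        ∂stdGaussian (EuclideanSpace ℝ ι)
      ≤ ENNReal.ofReal (2 * (2 * k)! * (16 * (A * A).trace) ^ k) := by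
  classical
  rw [stdGaussian_eq_map_pi_orthonormalBasis hA.eigenvectorBasis,
    lintegral_map (by fun_prop) (by fun_prop)]
  simp only [dotProduct_mulVec_sum_smul_eigenvectorBasis_s15, hA.trace_eq_sum_eigenvalues,
    trace_mul_self_eq_sum_eigenvalues_sq hA, RCLike.ofReal_real_eq_id, id, ← sum_sub_distrib,
    ← mul_sub_one]
  exact lintegral_pow_sum_mul_sq_sub_one_le _ k

lemma sum_apply_sq_le_sq [DecidableEq ι] {S : Matrix ι ι ℝ} {M : ℝ} (hS : S.PosSemidef)
    (hM : (M • 1 - S).PosSemidef) (i : ι) : ∑ j, S i j ^ 2 ≤ M ^ 2 := by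
  -- `M S - S² = √S (M - S) √S`.
  have hpsd : (M • S - S * S).PosSemidef := by
    obtain ⟨R, hR, rfl⟩ : ∃ R : Matrix ι ι ℝ, R.IsHermitian ∧ R * R = S :=
      ⟨CFC.sqrt S, (CFC.sqrt_nonneg S).posSemidef.isHermitian, CFC.sqrt_mul_sqrt_self S hS.nonneg⟩
    have h := hM.mul_mul_conjTranspose_same R
    rw [hR.eq] at h
    convert h using 1
    noncomm_ring
  have hsq : (S * S) i i = ∑ j, S i j ^ 2 := by
    simp only [mul_apply, sq]
    exact sum_congr rfl fun j _ => by rw [← hS.isHermitian.apply i j, star_trivial]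
  have h₁ : 0 ≤ M * S i i - ∑ j, S i j ^ 2 := by simpa [hsq] using hpsd.diag_nonneg (i := i)
  have h₂ : 0 ≤ M - S i i := by simpa using hM.diag_nonneg (i := i)
  nlinarith [hS.diag_nonneg (i := i)]

lemma trace_diagonal_mul_mul_diagonal_mul_le [DecidableEq ι] {S : Matrix ι ι ℝ} {M : ℝ}
    (hS : S.PosSemidef) (hM : (M • 1 - S).PosSemidef) (c : ι → ℝ) :
    (diagonal c * S * (diagonal c * S)).trace ≤ M ^ 2 * ∑ i, c i ^ 2 := by
  have hsymm (i j : ι) : S j i = S i j := hS.isHermitian.apply i j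
  calc (diagonal c * S * (diagonal c * S)).trace
      = ∑ i, ∑ j, c i * c j * S i j ^ 2 := by
        simp only [trace, diag_apply, mul_apply (M := diagonal c * S), diagonal_mul]
        exact sum_congr rfl fun i _ => sum_congr rfl fun j _ => by rw [hsymm i j]; ring
    _ ≤ ∑ i, ∑ j, (c i ^ 2 * S i j ^ 2 / 2 + c j ^ 2 * S j i ^ 2 / 2) := by
        gcongr with i _ j
        rw [hsymm i j]
        nlinarith [mul_nonneg (sq_nonneg (c i - c j)) (sq_nonneg (S i j))]
    _ = ∑ i, c i ^ 2 * ∑ j, S i j ^ 2 := by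
        simp only [sum_add_distrib, mul_sum]
        rw [sum_comm (f := fun i j => c j ^ 2 * S j i ^ 2 / 2), ← sum_add_distrib]
        exact sum_congr rfl fun i _ => by rw [← sum_add_distrib]; simp only [add_halves]
    _ ≤ ∑ i, c i ^ 2 * M ^ 2 := by
        gcongr with i
        exact sum_apply_sq_le_sq hS hM i
    _ = M ^ 2 * ∑ i, c i ^ 2 := by rw [← sum_mul, mul_comm]

end QuadraticForms

/-- `HasKhintchineBound X k A μ` is the Khintchine-type inequality `𝔼 (∑ cᵢ Xᵢ)²ᵏ ≤ A (∑ cᵢ²)ᵏ`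
for linear combinations of the coordinates of `X`. The moment is a lower Lebesgue integral, so
that no integrability has to be carried along. -/
def HasKhintchineBound {Ω ι : Type*} [MeasurableSpace Ω] [Fintype ι] (X : Ω → ι → ℝ) (k : ℕ)
    (A : ℝ) (μ : Measure Ω) : Prop :=
  ∀ c : ι → ℝ, ∫⁻ ω, ENNReal.ofReal ((∑ i, c i * X ω i) ^ (2 * k)) ∂μ
    ≤ ENNReal.ofReal (A * (∑ i, c i ^ 2) ^ k)

section CenteredSquares

variable {ι : Type*} [Fintype ι] [DecidableEq ι]

lemma dotProduct_transpose_mul_diagonal_mul_mulVec {R : Type*} [CommRing R] (A : Matrix ι ι R)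
    (c v : ι → R) : v ⬝ᵥ (Aᵀ * diagonal c * A) *ᵥ v = ∑ i, c i * (A *ᵥ v) i ^ 2 := by
  rw [← mulVec_mulVec, ← mulVec_mulVec, dotProduct_mulVec, vecMul_transpose]
  exact sum_congr rfl fun i _ => by rw [mulVec_diagonal]; ring

lemma hasKhintchineBound_multivariateGaussian {S : Matrix ι ι ℝ} {M : ℝ} (hS : S.PosSemidef)
    (hM : (M • 1 - S).PosSemidef) (k : ℕ) :
    HasKhintchineBound (fun (z : EuclideanSpace ℝ ι) i => z i ^ 2 - S i i) k
      (2 * (2 * k)! * (4 * M) ^ (2 * k)) (multivariateGaussian 0 S) := by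
  intro c
  rw [multivariateGaussian, lintegral_map (by fun_prop) (by fun_prop)]
  set R := CFC.sqrt S
  have hR : R.IsHermitian := (CFC.sqrt_nonneg S).posSemidef.isHermitian
  have hRR : R * R = S := CFC.sqrt_mul_sqrt_self S hS.nonneg
  set T := R * diagonal c * R
  have hT : T.IsHermitian := by
    have h := isHermitian_mul_mul_conjTranspose R (isHermitian_diagonal c)
    rwa [hR.eq] at h
  have hquad (g : EuclideanSpace ℝ ι) :
      ∑ i, c i * ((0 + toEuclideanCLM (𝕜 := ℝ) R g) i ^ 2 - S i i)
        = g.ofLp ⬝ᵥ T *ᵥ g.ofLp - T.trace := by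
    have hsq : g.ofLp ⬝ᵥ T *ᵥ g.ofLp = ∑ i, c i * (R *ᵥ g.ofLp) i ^ 2 := by
      rw [← dotProduct_transpose_mul_diagonal_mul_mulVec, (isHermitian_iff_isSymm.1 hR).eq]
    have htr : T.trace = ∑ i, c i * S i i := by
      rw [trace_mul_cycle, hRR, trace_mul_comm]
      simp [trace, diagonal_mul]
    simp only [hsq, htr, mul_sub, sum_sub_distrib, zero_add, ofLp_toEuclideanCLM]
  have htrace : (T * T).trace ≤ M ^ 2 * ∑ i, c i ^ 2 := by
    refine Eq.trans_le ?_ (trace_diagonal_mul_mul_diagonal_mul_le hS hM c)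
    rw [← hRR, trace_mul_comm (diagonal c * (R * R))]
    simp only [T, Matrix.mul_assoc]
    rw [trace_mul_comm R]
    simp only [Matrix.mul_assoc]
  have htrace₀ : 0 ≤ (T * T).trace := by
    rw [trace_mul_self_eq_sum_eigenvalues_sq hT]
    positivity
  simp only [hquad]
  refine (lintegral_pow_dotProduct_mulVec_sub_trace_le hT k).trans (ENNReal.ofReal_le_ofReal ?_)
  calc 2 * (2 * k)! * (16 * (T * T).trace) ^ k
      ≤ 2 * (2 * k)! * (16 * (M ^ 2 * ∑ i, c i ^ 2)) ^ k := by gcongr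
    _ = 2 * (2 * k)! * (4 * M) ^ (2 * k) * (∑ i, c i ^ 2) ^ k := by
        rw [pow_mul, mul_assoc _ (_ ^ k), ← mul_pow]
        ring

end CenteredSquares

lemma IsGaussianVec.map_toLp_eq_multivariateGaussian_s15 {Ω : Type*} [MeasureSpace Ω]
    [IsFiniteMeasure (ℙ : Measure Ω)] {p : ℕ} {Z : Ω → Fin p → ℝ} {S : Matrix (Fin p) (Fin p) ℝ}
    (h : IsGaussianVec Z S) (hZ : Measurable Z) (hS : S.PosSemidef) :
    Measure.map (fun ω => toLp 2 (Z ω)) ℙ = multivariateGaussian 0 S := by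
  have hquad (t : Fin p → ℝ) : ∑ i, ∑ j, t i * S i j * t j = t ⬝ᵥ S *ᵥ t := by
    simp only [dotProduct, mulVec, mul_sum, mul_assoc]
  refine Measure.ext_of_charFun (funext fun t => ?_)
  calc charFun (Measure.map (fun ω => toLp 2 (Z ω)) ℙ) t
      = charFun (Measure.map (fun ω => ∑ i, t i * Z ω i) ℙ) 1 := by
        rw [charFun_apply, charFun_apply, integral_map (by fun_prop) (by fun_prop),
          integral_map (by fun_prop) (by fun_prop)]
        simp [PiLp.inner_apply]
    _ = charFun (multivariateGaussian 0 S) t := by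
        have hnn : 0 ≤ t.ofLp ⬝ᵥ S *ᵥ t.ofLp := by simpa using hS.dotProduct_mulVec_nonneg t.ofLp
        rw [h, hquad, charFun_gaussianReal, charFun_multivariateGaussian hS]
        simp [hnn]

lemma IsGaussianVec.hasKhintchineBound {Ω : Type*} [MeasureSpace Ω]
    [IsFiniteMeasure (ℙ : Measure Ω)] {p : ℕ} {Z : Ω → Fin p → ℝ} {S : Matrix (Fin p) (Fin p) ℝ}
    {M : ℝ} (h : IsGaussianVec Z S) (hZ : Measurable Z) (hS : S.PosSemidef)
    (hM : (M • 1 - S).PosSemidef) (k : ℕ) :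
    HasKhintchineBound (fun ω i => Z ω i ^ 2 - S i i) k (2 * (2 * k)! * (4 * M) ^ (2 * k)) ℙ := by
  intro c
  have hc := hasKhintchineBound_multivariateGaussian hS hM k c
  rwa [← h.map_toLp_eq_multivariateGaussian_s15 hZ hS, lintegral_map (by fun_prop) (by fun_prop)] at hc

section Decoupling

variable {Ω ι κ : Type*} [MeasurableSpace Ω] [Fintype ι] [Fintype κ] {μ : Measure Ω}

lemma lintegral_sum_pow_le {f : ι → Ω → ENNReal} (hf : ∀ i, Measurable (f i)) {k : ℕ}
    (hk : k ≠ 0) {B : ENNReal} {b : ι → ENNReal}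
    (h : ∀ i, ∫⁻ ω, f i ω ^ k ∂μ ≤ B * b i ^ k) :
    ∫⁻ ω, (∑ i, f i ω) ^ k ∂μ ≤ B * (∑ i, b i) ^ k := by
  have hk' : (0 : ℝ) < k := by positivity
  have hnorm (g : Ω → ENNReal) : eLpNorm g k μ = (∫⁻ ω, g ω ^ k ∂μ) ^ (1 / k : ℝ) := by
    rw [eLpNorm_eq_lintegral_rpow_enorm_toReal (by simpa) (by simp)]
    simp
  have hroot (x y : ENNReal) : (x * y ^ k) ^ (1 / k : ℝ) = x ^ (1 / k : ℝ) * y := by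
    rw [ENNReal.mul_rpow_of_nonneg _ _ (by positivity), ← ENNReal.rpow_natCast, ← ENNReal.rpow_mul,
      mul_one_div_cancel hk'.ne', ENNReal.rpow_one]
  rw [← ENNReal.rpow_le_rpow_iff (by positivity : (0 : ℝ) < 1 / k), hroot]
  calc (∫⁻ ω, (∑ i, f i ω) ^ k ∂μ) ^ (1 / k : ℝ)
      = eLpNorm (∑ i, f i) k μ := by simp only [hnorm, Finset.sum_apply]
    _ ≤ ∑ i, eLpNorm (f i) k μ :=
        eLpNorm_sum_le (fun i _ => (hf i).aestronglyMeasurable)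
          (by exact_mod_cast Nat.one_le_iff_ne_zero.2 hk)
    _ ≤ ∑ i, B ^ (1 / k : ℝ) * b i := by
        gcongr with i
        rw [hnorm, ← hroot]
        gcongr
        exact h i
    _ = B ^ (1 / k : ℝ) * ∑ i, b i := by rw [mul_sum]

lemma HasKhintchineBound.lintegral_pow_sum_sq_le {Y : Ω → κ → ℝ} {k : ℕ} {B : ℝ}
    (h : HasKhintchineBound Y k B μ) (hY : Measurable Y) (hk : k ≠ 0) (hB : 0 ≤ B)
    (a : ι → κ → ℝ) :
    ∫⁻ ω, ENNReal.ofReal ((∑ i, (∑ j, a i j * Y ω j) ^ 2) ^ k) ∂μ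
      ≤ ENNReal.ofReal (B * (∑ i, ∑ j, a i j ^ 2) ^ k) := by
  have hsum (ω : Ω) : ENNReal.ofReal ((∑ i, (∑ j, a i j * Y ω j) ^ 2) ^ k)
      = (∑ i, ENNReal.ofReal ((∑ j, a i j * Y ω j) ^ 2)) ^ k := by
    rw [ENNReal.ofReal_pow (by positivity), ENNReal.ofReal_sum_of_nonneg fun i _ => sq_nonneg _]
  simp only [hsum]
  rw [ENNReal.ofReal_mul hB, ENNReal.ofReal_pow (by positivity),
    ENNReal.ofReal_sum_of_nonneg fun i _ => by positivity]
  refine lintegral_sum_pow_le (fun i => by fun_prop) hk fun i => ?_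
  rw [← ENNReal.ofReal_pow (by positivity), ← ENNReal.ofReal_mul hB]
  simpa only [← ENNReal.ofReal_pow (sq_nonneg _), ← pow_mul] using h (a i)

lemma lintegral_comp_prodMk_eq_of_indepFun {α β : Type*} [MeasurableSpace α] [MeasurableSpace β]
    [IsFiniteMeasure μ] {X : Ω → α} {Y : Ω → β} (hXY : IndepFun X Y μ) (hX : Measurable X)
    (hY : Measurable Y) {f : α × β → ENNReal} (hf : Measurable f) :
    ∫⁻ ω, f (X ω, Y ω) ∂μ = ∫⁻ ω', ∫⁻ ω, f (X ω, Y ω') ∂μ ∂μ := by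
  rw [← lintegral_map hf (hX.prodMk hY), hXY.map_prod_eq_prod_map_map hX.aemeasurable
    hY.aemeasurable, lintegral_prod_symm' _ hf, lintegral_map hf.lintegral_prod_left' hY]
  exact lintegral_congr fun ω' => lintegral_map (hf.comp measurable_prodMk_right) hX

lemma HasKhintchineBound.lintegral_pow_bilinear_le [IsFiniteMeasure μ] {X : Ω → ι → ℝ}
    {Y : Ω → κ → ℝ} {k : ℕ} {A B : ℝ} (hX : HasKhintchineBound X k A μ)
    (hY : HasKhintchineBound Y k B μ) (hXY : IndepFun X Y μ) (hXm : Measurable X)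
    (hYm : Measurable Y) (hk : k ≠ 0) (hA : 0 ≤ A) (hB : 0 ≤ B) (a : ι → κ → ℝ) :
    ∫⁻ ω, ENNReal.ofReal ((∑ i, ∑ j, a i j * X ω i * Y ω j) ^ (2 * k)) ∂μ
      ≤ ENNReal.ofReal (A * B * (∑ i, ∑ j, a i j ^ 2) ^ k) := by
  have hrow (x : ι → ℝ) (y : κ → ℝ) :
      ∑ i, ∑ j, a i j * x i * y j = ∑ i, (∑ j, a i j * y j) * x i := by
    simp only [sum_mul, mul_right_comm]
  calc ∫⁻ ω, ENNReal.ofReal ((∑ i, ∑ j, a i j * X ω i * Y ω j) ^ (2 * k)) ∂μ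
      = ∫⁻ ω', ∫⁻ ω, ENNReal.ofReal ((∑ i, (∑ j, a i j * Y ω' j) * X ω i) ^ (2 * k)) ∂μ ∂μ := by
        simp only [hrow]
        exact lintegral_comp_prodMk_eq_of_indepFun hXY hXm hYm (f := fun z : (ι → ℝ) × (κ → ℝ) =>
          ENNReal.ofReal ((∑ i, (∑ j, a i j * z.2 j) * z.1 i) ^ (2 * k))) (by fun_prop)
    _ ≤ ∫⁻ ω', ENNReal.ofReal A * ENNReal.ofReal ((∑ i, (∑ j, a i j * Y ω' j) ^ 2) ^ k) ∂μ := by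
        gcongr with ω'
        rw [← ENNReal.ofReal_mul hA]
        exact hX fun i => ∑ j, a i j * Y ω' j
    _ ≤ ENNReal.ofReal A * ENNReal.ofReal (B * (∑ i, ∑ j, a i j ^ 2) ^ k) := by
        rw [lintegral_const_mul _ (by fun_prop)]
        gcongr
        exact hY.lintegral_pow_sum_sq_le hYm hk hB a
    _ = ENNReal.ofReal (A * B * (∑ i, ∑ j, a i j ^ 2) ^ k) := by
        rw [← ENNReal.ofReal_mul hA, mul_assoc]

end Decoupling

lemma IsGaussianVec.integral_pow_bilinear_le {Ω : Type*} [MeasureSpace Ω]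
    [IsFiniteMeasure (ℙ : Measure Ω)] {p k : ℕ} {Z₁ Z₂ : Ω → Fin p → ℝ}
    {S : Matrix (Fin p) (Fin p) ℝ} {M : ℝ} (h₁ : IsGaussianVec Z₁ S) (h₂ : IsGaussianVec Z₂ S)
    (hZ₁ : Measurable Z₁) (hZ₂ : Measurable Z₂) (hind : IndepFun Z₁ Z₂ ℙ) (hS : S.PosSemidef)
    (hM : (M • 1 - S).PosSemidef) (hk : k ≠ 0) (a : Fin p → Fin p → ℝ) :
    ∫ ω, (∑ i, ∑ j, a i j * (Z₁ ω i ^ 2 - S i i) * (Z₂ ω j ^ 2 - S j j)) ^ (2 * k) ∂ℙ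
      ≤ (2 * (2 * k)! * (4 * M) ^ (2 * k)) ^ 2 * (∑ i, ∑ j, a i j ^ 2) ^ k := by
  have hA : 0 ≤ 2 * (2 * k)! * (4 * M) ^ (2 * k) := by
    have := (even_two_mul k).pow_nonneg (4 * M)
    positivity
  have hsq : Measurable fun (z : Fin p → ℝ) i => z i ^ 2 - S i i := by fun_prop
  rw [integral_eq_lintegral_of_nonneg_ae (ae_of_all _ fun ω => (even_two_mul k).pow_nonneg _)
    (by fun_prop), sq]
  exact ENNReal.toReal_le_of_le_ofReal (by positivity)
    ((h₁.hasKhintchineBound hZ₁ hS hM k).lintegral_pow_bilinear_le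
      (h₂.hasKhintchineBound hZ₂ hS hM k) (hind.comp hsq hsq) (hsq.comp hZ₁) (hsq.comp hZ₂)
      hk hA hA a)

lemma div_add_one_mul_sub_two_le {x : ℝ} (hx : 3 ≤ x) : x / ((x + 1) * (x - 2)) ≤ 3 / x := by
  rw [div_le_div_iff₀ (by nlinarith) (by linarith)]
  nlinarith

lemma sum_sum_sq_le_card_mul_card_mul_sq {ι κ : Type*} [Fintype ι] [Fintype κ] {a : ι → κ → ℝ}
    {c : ℝ} (ha : ∀ i j, |a i j| ≤ c) :
    ∑ i, ∑ j, a i j ^ 2 ≤ Fintype.card ι * Fintype.card κ * c ^ 2 := by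
  calc ∑ i, ∑ j, a i j ^ 2 ≤ ∑ _i : ι, ∑ _j : κ, c ^ 2 := by
        gcongr ∑ i, ∑ j, ?_ with i _ j
        exact sq_le_sq' (abs_le.1 (ha i j)).1 (abs_le.1 (ha i j)).2
    _ = Fintype.card ι * Fintype.card κ * c ^ 2 := by simp [mul_assoc]

lemma posSemidef_of_isSymm_of_sum_nonneg {ι : Type*} [Fintype ι] {S : Matrix ι ι ℝ}
    (hS : S.IsSymm) (h : ∀ v : ι → ℝ, 0 ≤ ∑ i, ∑ j, v i * S i j * v j) : S.PosSemidef := by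
  refine .of_dotProduct_mulVec_nonneg (isHermitian_iff_isSymm.2 hS) fun v => ?_
  simpa only [star_trivial, dotProduct, mulVec, mul_sum, mul_assoc] using h v

lemma posSemidef_smul_one_sub_of_sum_le {ι : Type*} [Fintype ι] [DecidableEq ι]
    {S : Matrix ι ι ℝ} {M : ℝ} (hS : S.IsSymm)
    (h : ∀ v : ι → ℝ, ∑ i, ∑ j, v i * S i j * v j ≤ M * ∑ i, v i ^ 2) :
    (M • 1 - S).PosSemidef := by
  refine posSemidef_of_isSymm_of_sum_nonneg ((isSymm_one.smul M).sub hS) fun v => ?_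
  have hone : ∑ i, ∑ j, v i * (M • (1 : Matrix ι ι ℝ)) i j * v j = M * ∑ i, v i ^ 2 := by
    simp [one_apply, mul_sum, sq, mul_comm, mul_left_comm]
  simpa only [Matrix.sub_apply, mul_sub, sub_mul, sum_sub_distrib, hone, sub_nonneg] using h v

theorem stmt15_general {Ω : Type*} [MeasureSpace Ω] [IsFiniteMeasure (ℙ : Measure Ω)]
    {K₀ p n : ℕ} (hK : K₀ ≠ 0) (hKeven : Even K₀) (hn : 3 ≤ n) {M₀ Cn : ℝ}
    {S bbar : Matrix (Fin p) (Fin p) ℝ} (hS : S.PosSemidef) (hM₀ : (M₀ • 1 - S).PosSemidef)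
    (hb : ∀ i j, |bbar i j| ≤ Cn) {Z₁ Z₂ : Ω → Fin p → ℝ} (hZ₁ : Measurable Z₁)
    (hZ₂ : Measurable Z₂) (h₁ : IsGaussianVec Z₁ S) (h₂ : IsGaussianVec Z₂ S)
    (hind : IndepFun Z₁ Z₂ ℙ) :
    ∫ ω, (∑ i, ∑ j, 2 * ((n : ℝ) / ((n + 1) * (n - 2))) * bbar i j
        * (Z₁ ω i ^ 2 - S i i) * (Z₂ ω j ^ 2 - S j j)) ^ K₀ ∂ℙ
      ≤ (2 * K₀ ! * (4 * M₀) ^ K₀) ^ 2 * 6 ^ K₀ * (Cn * p) ^ K₀ / n ^ K₀ := by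
  obtain ⟨k, rfl⟩ := hKeven.two_dvd
  have hn' : (3 : ℝ) ≤ n := by exact_mod_cast hn
  set a : Fin p → Fin p → ℝ := fun i j => 2 * ((n : ℝ) / ((n + 1) * (n - 2))) * bbar i j
  have ha (i j : Fin p) : |a i j| ≤ 6 * Cn / n := by
    have hpos : 0 ≤ (n : ℝ) / ((n + 1) * (n - 2)) :=
      div_nonneg (by positivity) (mul_nonneg (by positivity) (by linarith))
    calc |a i j| = 2 * (n / ((n + 1) * (n - 2))) * |bbar i j| := by
          rw [abs_mul, abs_of_nonneg (by positivity)]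
      _ ≤ 2 * (3 / n) * Cn := by
          gcongr 2 * ?_ * ?_
          exacts [div_add_one_mul_sub_two_le hn', hb i j]
      _ = 6 * Cn / n := by ring
  have hsum : ∑ i, ∑ j, a i j ^ 2 ≤ (6 * (Cn * p) / n) ^ 2 := by
    refine (sum_sum_sq_le_card_mul_card_mul_sq ha).trans_eq ?_
    rw [Fintype.card_fin]
    ring
  calc _ ≤ (2 * (2 * k)! * (4 * M₀) ^ (2 * k)) ^ 2 * (∑ i, ∑ j, a i j ^ 2) ^ k :=
        h₁.integral_pow_bilinear_le h₂ hZ₁ hZ₂ hind hS hM₀ (by omega) a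
    _ ≤ (2 * (2 * k)! * (4 * M₀) ^ (2 * k)) ^ 2 * ((6 * (Cn * p) / n) ^ 2) ^ k := by gcongr
    _ = _ := by
        rw [← pow_mul, div_pow, mul_pow]
        ring

/-- For `Z₁, Z₂` i.i.d. `N_p(0,Σ)` with `Σ ∈ 𝓕_α` and
`h(Z₁,Z₂) = ∑_{i,j} 2 b_n b̄_ij (z_{1i}²−σ_ii)(z_{2j}²−σ_jj)` with
`b_n = n/((n+1)(n-2))` and `|b̄_ij| ≤ C_n`, for any even `K₀ ≥ 2` there is `C`
with `𝔼 h(Z₁,Z₂)^{K₀} ≤ C (C_n p)^{K₀}/n^{K₀}`. -/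
theorem stmt15 (M M₀ α : ℝ) (hM : 0 < M) (hM₀ : 0 < M₀) (hα : 0 < α)
    (K₀ : ℕ) (hK : 2 ≤ K₀) (hKeven : Even K₀) :
    ∃ C : ℝ, 0 < C ∧
      ∀ (p n τ : ℕ), 3 ≤ n → 1 ≤ τ → τ ≤ p →
      ∀ (Cn : ℝ), 0 ≤ Cn →
      ∀ (S : Matrix (Fin p) (Fin p) ℝ), S.IsSymm →
        (∀ v : Fin p → ℝ, 0 ≤ ∑ i, ∑ j, v i * S i j * v j) →
        (∀ v : Fin p → ℝ, ∑ i, ∑ j, v i * S i j * v j ≤ M₀ * ∑ i, v i ^ 2) →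
        (∀ k : ℕ, 1 ≤ k → ∀ j : Fin p,
            ∑ i ∈ Finset.univ.filter
                (fun i : Fin p => k < ((i : ℤ) - (j : ℤ)).natAbs),
              |S i j| ≤ M * (k : ℝ) ^ (-α)) →
      ∀ (bbar : Matrix (Fin p) (Fin p) ℝ), (∀ i j, |bbar i j| ≤ Cn) →
      ∀ (Ω : Type) (_ : MeasureSpace Ω)
        (_ : IsProbabilityMeasure (ℙ : Measure Ω))
        (Z₁ Z₂ : Ω → Fin p → ℝ), Measurable Z₁ → Measurable Z₂ →
        IsGaussianVec Z₁ S → IsGaussianVec Z₂ S → IndepFun Z₁ Z₂ ℙ →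
      (∫ ω, (∑ i : Fin p, ∑ j : Fin p,
            2 * ((n : ℝ) / (((n : ℝ) + 1) * ((n : ℝ) - 2))) * bbar i j
              * (Z₁ ω i ^ 2 - S i i) * (Z₂ ω j ^ 2 - S j j)) ^ K₀ ∂ℙ)
        ≤ C * (Cn * p) ^ K₀ / (n : ℝ) ^ K₀ := by
  exact ⟨(2 * K₀ ! * (4 * M₀) ^ K₀) ^ 2 * 6 ^ K₀, by positivity,
    fun p n _ hn _ _ Cn _ S hS hpos hle _ bbar hb Ω _ _ Z₁ Z₂ hZ₁ hZ₂ h₁ h₂ hind =>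
      stmt15_general (by omega) hKeven hn (posSemidef_of_isSymm_of_sum_nonneg hS hpos)
        (posSemidef_smul_one_sub_of_sum_le hS hle) hb hZ₁ hZ₂ h₁ h₂ hind⟩
end
end
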